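/- arXiv:1606.00724 — 2 statements merged into one kernel-verified Lean document; each statement's English description precedes it below -/
import Mathlib

section
/- Let k ∈ [0, 2r+1] and β ∈ ℕ_0^d with |β|_B > 0. If ψ ∈ C^k_B(ℝ^d) (for k = 0, ψ bounded continuous), then the function u_0(t,x) = ∫_{ℝ^d} Γ_0(t,x;T,y) ψ(y) dy satisfies |D_x^β u_0(t,x)| ≤ C (T-t)^{(k-|β|_B)/2} for all 0 ≤ t < T and x ∈ ℝ^d, where C depends only on M, μ, B, T, β and ‖ψ‖_{C^k_B(ℝ^d)} (resp. sup|ψ| when k = 0). -/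
/-!
Write `λ² = T - t` and `D = D₀(λ) = diag(λ^{σ_j})`. Since `B` only has first subdiagonal blocks,
`λ² B = D B D⁻¹`, hence `e^{λ²sB} = D e^{sB} D⁻¹` and `C(λ²) = D C(1) D` (`mexp_scale`,
`covMat_scale`). The substitution `y = D z` therefore rewrites `u₀(t, ·)` as a unit-time integral
`κ ∫ exp(-⟨Q v, v⟩ / 2) ψ(D z) dz` with `v = z - e^B (D⁻¹ x)` and `Q = C(1)⁻¹`
(`u0fn_eq_polConv`).

Differentiating under the integral, each `∂_{x_i}` produces a factor `λ^{-σ_i}` and replaces the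
Gaussian by a polynomial in `v` and the entries of `Q` times the Gaussian (`Dx_polConv`); the
polynomial depends on `B` and `β` only. Because `|β|_B > 0`, the resulting kernel has mean zero:
the same formula applied to a constant function differentiates a constant. So `ψ(D z)` may be
replaced by its difference from its value at the centre `z = e^B (D⁻¹ x)`, which is at most
`2 |Cψ| λ^k [v]_B^k` because `[D v]_B = λ [v]_B`. The powers of `λ` add up to
`λ^{k - |β|_B} = (T - t)^{(k - |β|_B) / 2}`, and what is left is a Gaussian moment
(`abs_Dx_polConv_le`).

The moment is uniform in `A₀` because `C(1)` has two-sided bounds depending only on `B`, `μ`, `M`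
(`cov_bounds`). By ellipticity it is enough to treat `A₀ = 1`, where positivity is Kalman's
argument: if the first group of `e^{sBᵀ} v` vanishes for all `s`, differentiating in `s` and using
the full rank of the blocks `B_j` shows successively that all groups vanish (`kalman`).
-/

open MeasureTheory Matrix Finset

noncomputable section

/-- Index set for `ℝ^d` split into groups of sizes `p 0, …, p r`:
the element `⟨i, a⟩` is the `a`-th coordinate of the `i`-th group. -/
abbrev Idx (r : ℕ) (p : Fin (r + 1) → ℕ) : Type := (i : Fin (r + 1)) × Fin (p i)

variable {r : ℕ} {p : Fin (r + 1) → ℕ}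

/-- The dilation exponent `σ_j = 2i+1` for a coordinate `j` in group `i`. -/
def sigmaWt (j : Idx r p) : ℕ := 2 * (j.1 : ℕ) + 1

/-- The `B`-length `|β|_B = Σ_j σ_j β_j` of a multi-index `β`. -/
def bwt (β : Idx r p → ℕ) : ℕ := ∑ j, sigmaWt j * β j

/-- The homogeneous norm `[x]_B = Σ_j |x_j|^{1/σ_j}`. -/
def hnorm (x : Idx r p → ℝ) : ℝ := ∑ j, |x j| ^ (1 / (sigmaWt j : ℝ))

/-- Structural assumption on the matrix `B`: the group sizes are decreasing and positive,
the only nonzero blocks are the subdiagonal ones `B_1, …, B_r`, and the block `B_i`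
(of size `p i × p (i-1)`) has full rank `p i`. -/
structure IsKolB (B : Matrix (Idx r p) (Idx r p) ℝ) : Prop where
  anti : Antitone p
  ppos : ∀ i, 1 ≤ p i
  sparse : ∀ j k : Idx r p, (j.1 : ℕ) ≠ (k.1 : ℕ) + 1 → B j k = 0
  rk : ∀ i k : Fin (r + 1), (i : ℕ) = (k : ℕ) + 1 →
    (Matrix.of fun (a : Fin (p i)) (b : Fin (p k)) => B ⟨i, a⟩ ⟨k, b⟩).rank = p i

/-- Matrix exponential `e^M = Σ_n M^n / n!` (defined entrywise). -/
def mexp (M : Matrix (Idx r p) (Idx r p) ℝ) : Matrix (Idx r p) (Idx r p) ℝ :=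
  Matrix.of fun i j => ∑' n : ℕ, ((n.factorial : ℝ)⁻¹ • M ^ n) i j

/-- The `d×d` matrix whose top-left `p 0 × p 0` block is `A₀` and whose other entries vanish. -/
def embed0 (A₀ : Matrix (Fin (p 0)) (Fin (p 0)) ℝ) : Matrix (Idx r p) (Idx r p) ℝ :=
  Matrix.of fun j k =>
    if h : j.1 = 0 ∧ k.1 = 0 then
      A₀ (Fin.cast (congrArg p h.1) j.2) (Fin.cast (congrArg p h.2) k.2)
    else 0

/-- The covariance matrix `C(t) = ∫_0^t e^{sB} A e^{sBᵀ} ds`. -/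
def covMat (B A : Matrix (Idx r p) (Idx r p) ℝ) (t : ℝ) :
    Matrix (Idx r p) (Idx r p) ℝ :=
  Matrix.of fun j k => ∫ s in (0:ℝ)..t, (mexp (s • B) * A * (mexp (s • B))ᵀ) j k

/-- The Gaussian kernel
`Γ₀(t,x;s,y) = (2π)^{-d/2} |det C(s-t)|^{-1/2} exp(-⟨C(s-t)⁻¹(y-e^{(s-t)B}x), y-e^{(s-t)B}x⟩/2)`. -/
def gauss (B A : Matrix (Idx r p) (Idx r p) ℝ)
    (t : ℝ) (x : Idx r p → ℝ) (s : ℝ) (y : Idx r p → ℝ) : ℝ :=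
  (2 * Real.pi) ^ (-(Fintype.card (Idx r p) : ℝ) / 2) *
    |(covMat B A (s - t)).det| ^ (-(1:ℝ) / 2) *
    Real.exp (-(1/2) *
      ((covMat B A (s - t))⁻¹ *ᵥ (y - mexp ((s - t) • B) *ᵥ x)) ⬝ᵥ
        (y - mexp ((s - t) • B) *ᵥ x))

/-- Partial derivative `∂_{x_i}`. -/
def pdx (i : Idx r p) (f : (Idx r p → ℝ) → ℝ) : (Idx r p → ℝ) → ℝ :=
  fun x => fderiv ℝ f x (Pi.single i 1)

/-- Iterated partial derivative `D^β = ∂_{x_1}^{β_1} ⋯ ∂_{x_d}^{β_d}`. -/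
def Dx (β : Idx r p → ℕ) (f : (Idx r p → ℝ) → ℝ) : (Idx r p → ℝ) → ℝ :=
  (Finset.univ (α := Idx r p)).toList.foldr (fun i g => (pdx i)^[β i] g) f

/-- The indices of the first group (coordinates `1, …, p_0`). -/
def G0set (r : ℕ) (p : Fin (r + 1) → ℕ) : Finset (Idx r p) :=
  Finset.univ.filter fun i => (i.1 : ℕ) = 0

/-- A vector supported in the coordinates of the first group. -/
def suppG0 (ξ : Idx r p → ℝ) : Prop := ∀ i : Idx r p, (i.1 : ℕ) ≠ 0 → ξ i = 0

/-- The vector field `Y f(t,x) = ⟨Bx, ∇_x f⟩ + ∂_t f`. -/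
def Yop (B : Matrix (Idx r p) (Idx r p) ℝ)
    (f : ℝ → (Idx r p → ℝ) → ℝ) : ℝ → (Idx r p → ℝ) → ℝ :=
  fun t x => (∑ j, (B *ᵥ x) j * pdx j (f t) x) + deriv (fun τ => f τ x) t

/-- The derivative `Y^k ∂_x^β f`. -/
def YDx (B : Matrix (Idx r p) (Idx r p) ℝ) (k : ℕ) (β : Idx r p → ℕ)
    (f : ℝ → (Idx r p → ℝ) → ℝ) : ℝ → (Idx r p → ℝ) → ℝ :=
  (Yop B)^[k] (fun t => Dx β (f t))

/-- The multi-index factorial `β! = Π_j (β_j)!`. -/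
def mfact (β : Idx r p → ℕ) : ℕ := ∏ j, (β j).factorial

/-- The `n`-th order intrinsic Taylor polynomial of `a` centered at `z̄ = (tb, xb)`:
`T_n(a,z̄)(t,x) = Σ_{2k+|β|_B ≤ n} (1/(k!β!)) (Y^k ∂^β a)(z̄) (t-tb)^k (x-e^{(t-tb)B}xb)^β`,
with `T_n ≡ 0` for `n < 0`. -/
def Tpoly (B : Matrix (Idx r p) (Idx r p) ℝ) (a : ℝ → (Idx r p → ℝ) → ℝ)
    (tb : ℝ) (xb : Idx r p → ℝ) (n : ℤ) : ℝ → (Idx r p → ℝ) → ℝ :=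
  fun t x =>
    ∑ k ∈ Finset.range (n.toNat + 1),
      ∑ β ∈ Fintype.piFinset (fun _ : Idx r p => Finset.range (n.toNat + 1)),
        if 2 * (k : ℤ) + (bwt β : ℤ) ≤ n then
          ((k.factorial * mfact β : ℕ) : ℝ)⁻¹ * YDx B k β a tb xb * (t - tb) ^ k *
            ∏ j, (x j - (mexp ((t - tb) • B) *ᵥ xb) j) ^ β j
        else 0

/-- `M̄(t) = e^{-tB} C(t) e^{-tBᵀ}`. -/
def Mbar (B A : Matrix (Idx r p) (Idx r p) ℝ) (t : ℝ) : Matrix (Idx r p) (Idx r p) ℝ :=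
  mexp (-(t • B)) * covMat B A t * (mexp (-(t • B)))ᵀ

/-- The first order operator `M_i(t,x) f = (e^{tB}x)_i f + (e^{tB} M̄(t) ∇_x f)_i`. -/
def Mop (B A : Matrix (Idx r p) (Idx r p) ℝ) (τ : ℝ) (i : Idx r p)
    (f : (Idx r p → ℝ) → ℝ) : (Idx r p → ℝ) → ℝ :=
  fun x => (mexp (τ • B) *ᵥ x) i * f x + ((mexp (τ • B) * Mbar B A τ) *ᵥ fun j => pdx j f x) i

/-- The composition `M^β = M_1^{β_1} ∘ ⋯ ∘ M_d^{β_d}`. -/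
def Mpow (B A : Matrix (Idx r p) (Idx r p) ℝ) (τ : ℝ) (β : Idx r p → ℕ)
    (f : (Idx r p → ℝ) → ℝ) : (Idx r p → ℝ) → ℝ :=
  (Finset.univ (α := Idx r p)).toList.foldr (fun i g => (Mop B A τ i)^[β i] g) f

/-- The shifted operator `(M_i(τ,x) - c) f`. -/
def MopShift (B A : Matrix (Idx r p) (Idx r p) ℝ) (τ : ℝ) (c : ℝ) (i : Idx r p)
    (f : (Idx r p → ℝ) → ℝ) : (Idx r p → ℝ) → ℝ :=
  fun x => Mop B A τ i f x - c * f x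

/-- The composition `(M(τ,x) - c)^β` of shifted operators. -/
def MshiftPow (B A : Matrix (Idx r p) (Idx r p) ℝ) (τ : ℝ) (c : Idx r p → ℝ)
    (β : Idx r p → ℕ) (f : (Idx r p → ℝ) → ℝ) : (Idx r p → ℝ) → ℝ :=
  (Finset.univ (α := Idx r p)).toList.foldr (fun i g => (MopShift B A τ (c i) i)^[β i] g) f

/-- The operator `W_i(τ) f = (e^{-τBᵀ} ∇_x f)_i`. -/
def Wop (B : Matrix (Idx r p) (Idx r p) ℝ) (τ : ℝ) (i : Idx r p)
    (f : (Idx r p → ℝ) → ℝ) : (Idx r p → ℝ) → ℝ :=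
  fun x => (mexp (-(τ • Bᵀ)) *ᵥ fun j => pdx j f x) i

/-- The composition `W^β(τ) = W_1^{β_1}(τ) ∘ ⋯ ∘ W_d^{β_d}(τ)`. -/
def Wpow (B : Matrix (Idx r p) (Idx r p) ℝ) (τ : ℝ) (β : Idx r p → ℕ)
    (f : (Idx r p → ℝ) → ℝ) : (Idx r p → ℝ) → ℝ :=
  (Finset.univ (α := Idx r p)).toList.foldr (fun i g => (Wop B τ i)^[β i] g) f

/-- The Taylor polynomial `T_n(a,z̄)(s,·)` with the commuting operators `M_i(τ,x)` substituted
for the spatial arguments. -/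
def TpolyOp (B A : Matrix (Idx r p) (Idx r p) ℝ) (a : ℝ → (Idx r p → ℝ) → ℝ)
    (tb : ℝ) (xb : Idx r p → ℝ) (n : ℤ) (s τ : ℝ)
    (f : (Idx r p → ℝ) → ℝ) : (Idx r p → ℝ) → ℝ :=
  fun x =>
    ∑ k ∈ Finset.range (n.toNat + 1),
      ∑ β ∈ Fintype.piFinset (fun _ : Idx r p => Finset.range (n.toNat + 1)),
        if 2 * (k : ℤ) + (bwt β : ℤ) ≤ n then
          ((k.factorial * mfact β : ℕ) : ℝ)⁻¹ * YDx B k β a tb xb * (s - tb) ^ k *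
            MshiftPow B A τ (mexp ((s - tb) • B) *ᵥ xb) β f x
        else 0

/-- The operator `G_n(t,s,x)` of the expansion. -/
def Gop (B A : Matrix (Idx r p) (Idx r p) ℝ)
    (a : Idx r p → Idx r p → ℝ → (Idx r p → ℝ) → ℝ)
    (aD : Idx r p → ℝ → (Idx r p → ℝ) → ℝ) (tb : ℝ) (xb : Idx r p → ℝ)
    (n : ℤ) (t s : ℝ) (f : (Idx r p → ℝ) → ℝ) : (Idx r p → ℝ) → ℝ :=
  fun x =>
    (1/2) * ∑ i ∈ G0set r p, ∑ j ∈ G0set r p,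
        (TpolyOp B A (a i j) tb xb n s (s - t) (Wop B (s - t) i (Wop B (s - t) j f)) x
          - TpolyOp B A (a i j) tb xb (n - 1) s (s - t) (Wop B (s - t) i (Wop B (s - t) j f)) x)
      + ∑ i ∈ G0set r p,
        (TpolyOp B A (aD i) tb xb (n - 1) s (s - t) (Wop B (s - t) i f) x
          - TpolyOp B A (aD i) tb xb (n - 2) s (s - t) (Wop B (s - t) i f) x)

/-- `((K_n - K_{n-1}) g)(s,ξ)` for a purely spatial function `g`. -/
def Kdiff (B : Matrix (Idx r p) (Idx r p) ℝ)
    (a : Idx r p → Idx r p → ℝ → (Idx r p → ℝ) → ℝ)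
    (aD : Idx r p → ℝ → (Idx r p → ℝ) → ℝ) (tb : ℝ) (xb : Idx r p → ℝ)
    (n : ℤ) (g : (Idx r p → ℝ) → ℝ) (s : ℝ) (ξ : Idx r p → ℝ) : ℝ :=
  (1/2) * ∑ i ∈ G0set r p, ∑ j ∈ G0set r p,
      (Tpoly B (a i j) tb xb n s ξ - Tpoly B (a i j) tb xb (n - 1) s ξ) * pdx i (pdx j g) ξ
    + ∑ i ∈ G0set r p, (Tpoly B (aD i) tb xb (n - 1) s ξ - Tpoly B (aD i) tb xb (n - 2) s ξ) *
        pdx i g ξ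

/-- The matrix `A(z̄)` with top-left block `(a_{ij}(z̄))` and zeros elsewhere. -/
def AzMat (a : Idx r p → Idx r p → ℝ → (Idx r p → ℝ) → ℝ) (tb : ℝ) (xb : Idx r p → ℝ) :
    Matrix (Idx r p) (Idx r p) ℝ :=
  Matrix.of fun i j => if (i.1 : ℕ) = 0 ∧ (j.1 : ℕ) = 0 then a i j tb xb else 0

/-- `u₀(t,x) = ∫ Γ₀(t,x;T,y) φ(y) dy`. -/
def u0fn (B A : Matrix (Idx r p) (Idx r p) ℝ) (T : ℝ) (φ : (Idx r p → ℝ) → ℝ)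
    (t : ℝ) (x : Idx r p → ℝ) : ℝ :=
  ∫ y : Idx r p → ℝ, gauss B A t x T y * φ y

/-- The Duhamel recursion: `u_0 = ∫ Γ₀ φ` and
`u_n(t,x) = ∫_t^T ∫ Γ₀(t,x;s,ξ) Σ_{h=1}^n ((K_h - K_{h-1}) u_{n-h})(s,ξ) dξ ds`. -/
def useq (B : Matrix (Idx r p) (Idx r p) ℝ)
    (a : Idx r p → Idx r p → ℝ → (Idx r p → ℝ) → ℝ)
    (aD : Idx r p → ℝ → (Idx r p → ℝ) → ℝ) (tb : ℝ) (xb : Idx r p → ℝ)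
    (T : ℝ) (φ : (Idx r p → ℝ) → ℝ) : ℕ → ℝ → (Idx r p → ℝ) → ℝ
  | 0 => u0fn B (AzMat a tb xb) T φ
  | n + 1 => fun t x =>
      ∫ s in t..T, ∫ ξ : Idx r p → ℝ, gauss B (AzMat a tb xb) t x s ξ *
        ∑ h ∈ Finset.range (n + 1),
          Kdiff B a aD tb xb ((h : ℤ) + 1) (useq B a aD tb xb T φ (n - h) s) s ξ
  termination_by n => n
  decreasing_by omega

/-- Nested integral of a composition of operators `G_{i_1}(t,s_1) ⋯ G_{i_h}(t,s_h)` applied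
to `u`, over the simplex `lo ≤ s_1 ≤ ⋯ ≤ s_h ≤ T`. -/
def Lrec (B A : Matrix (Idx r p) (Idx r p) ℝ)
    (a : Idx r p → Idx r p → ℝ → (Idx r p → ℝ) → ℝ)
    (aD : Idx r p → ℝ → (Idx r p → ℝ) → ℝ) (tb : ℝ) (xb : Idx r p → ℝ)
    (t T : ℝ) (u : (Idx r p → ℝ) → ℝ) : List ℕ → ℝ → (Idx r p → ℝ) → ℝ
  | [] => fun _ => u
  | m :: ms => fun lo x =>
      ∫ s in lo..T, Gop B A a aD tb xb (m : ℤ) t s (Lrec B A a aD tb xb t T u ms s) x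

/-- The operator `L_n(t,T,x) = Σ_{h=1}^n ∫_t^T ds_1 ⋯ ∫_{s_{h-1}}^T ds_h
Σ_{i_1+⋯+i_h=n, i_j ≥ 1} G_{i_1}(t,s_1) ⋯ G_{i_h}(t,s_h)`. -/
def Lop (B A : Matrix (Idx r p) (Idx r p) ℝ)
    (a : Idx r p → Idx r p → ℝ → (Idx r p → ℝ) → ℝ)
    (aD : Idx r p → ℝ → (Idx r p → ℝ) → ℝ) (tb : ℝ) (xb : Idx r p → ℝ)
    (n : ℕ) (t T : ℝ) (u : (Idx r p → ℝ) → ℝ) : (Idx r p → ℝ) → ℝ :=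
  fun x => ∑ h ∈ Finset.Icc 1 n,
    ∑ iv ∈ (Fintype.piFinset fun _ : Fin h => Finset.Icc 1 n).filter (fun iv => ∑ j, iv j = n),
      Lrec B A a aD tb xb t T u (List.ofFn iv) t x

/-- The dilation matrix `D₀(λ) = diag(λ^{σ_1}, …, λ^{σ_d})`. -/
def D0mat (r : ℕ) (p : Fin (r + 1) → ℕ) (lam : ℝ) : Matrix (Idx r p) (Idx r p) ℝ :=
  Matrix.diagonal fun j => lam ^ sigmaWt j

/-- The index set `J_n` of Lemma A.8. -/
def Jset (r : ℕ) (p : Fin (r + 1) → ℕ) (n : ℕ) :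
    Finset ((Idx r p → ℕ) × (Idx r p → ℕ)) :=
  ((Fintype.piFinset fun _ : Idx r p => Finset.range (3 * n + 1)) ×ˢ
    (Fintype.piFinset fun _ : Idx r p => Finset.range (n + 1))).filter
    fun q => 1 ≤ ∑ j, q.1 j ∧ ∑ j, q.1 j ≤ 3 * n ∧ bwt q.2 ≤ n ∧
      0 ≤ (bwt q.1 : ℤ) - (bwt q.2 : ℤ) + (n : ℤ)

/-- The index set of pairs `(δ, α)` with `|δ| + |α| ≤ |β|` and `|δ|_B - |α|_B ≤ |β|_B`. -/
def Sset (β : Idx r p → ℕ) : Finset ((Idx r p → ℕ) × (Idx r p → ℕ)) :=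
  ((Fintype.piFinset fun _ : Idx r p => Finset.range (∑ j, β j + 1)) ×ˢ
    (Fintype.piFinset fun _ : Idx r p => Finset.range (∑ j, β j + 1))).filter
    fun q => (∑ j, q.1 j) + (∑ j, q.2 j) ≤ ∑ j, β j ∧
      (bwt q.1 : ℤ) - (bwt q.2 : ℤ) ≤ (bwt β : ℤ)

/-- The index set of multi-indices `α` with `|α| = |β|` and `|α|_B ≥ |β|_B`. -/
def Wset (β : Idx r p → ℕ) : Finset (Idx r p → ℕ) :=
  (Fintype.piFinset fun _ : Idx r p => Finset.range (∑ j, β j + 1)).filter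
    fun α => ∑ j, α j = ∑ j, β j ∧ bwt β ≤ bwt α

/-! ### Polynomials times Gaussians -/

section Analysis

variable {ι : Type*}

/-- Functions polynomial jointly in the point `v` and in the entries of the matrix `Q`. Treating
`Q` as a variable makes the derivatives of `exp (-⟨Qv, v⟩ / 2)` come from polynomials that do not
depend on `Q`, which is what makes all the bounds below uniform. -/
inductive Pol : ((ι → ℝ) → Matrix ι ι ℝ → ℝ) → Prop
  | const (c : ℝ) : Pol fun _ _ => c
  | coord (i : ι) : Pol fun v _ => v i
  | entry (i j : ι) : Pol fun _ Q => Q i j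
  | add {P R : (ι → ℝ) → Matrix ι ι ℝ → ℝ} : Pol P → Pol R → Pol fun v Q => P v Q + R v Q
  | mul {P R : (ι → ℝ) → Matrix ι ι ℝ → ℝ} : Pol P → Pol R → Pol fun v Q => P v Q * R v Q

lemma Pol.sum {κ : Type*} (s : Finset κ) {P : κ → (ι → ℝ) → Matrix ι ι ℝ → ℝ}
    (h : ∀ a, Pol (P a)) : Pol fun v Q => ∑ a ∈ s, P a v Q := by
  classical
  induction s using Finset.induction_on with
  | empty => simpa using Pol.const (ι := ι) 0
  | insert a s ha ih => simpa [Finset.sum_insert ha] using (h a).add ih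

variable [Fintype ι]

lemma Pol.hasFDerivAt {P : (ι → ℝ) → Matrix ι ι ℝ → ℝ} (h : Pol P) :
    ∃ D : ι → (ι → ℝ) → Matrix ι ι ℝ → ℝ, (∀ i, Pol (D i)) ∧ ∀ Q v,
      HasFDerivAt (fun v => P v Q)
        (∑ i, D i v Q • ContinuousLinearMap.proj (R := ℝ) (φ := fun _ : ι => ℝ) i) v := by
  classical
  induction h with
  | const c =>
    refine ⟨fun _ _ _ => 0, fun _ => Pol.const 0, fun Q v => ?_⟩
    simpa using hasFDerivAt_const c v
  | coord i =>
    refine ⟨fun j _ _ => if j = i then 1 else 0, fun _ => Pol.const _, fun Q v => ?_⟩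
    simpa [ite_smul] using hasFDerivAt_apply (𝕜 := ℝ) i v
  | entry i j =>
    refine ⟨fun _ _ _ => 0, fun _ => Pol.const 0, fun Q v => ?_⟩
    simpa using hasFDerivAt_const (Q i j) v
  | @add P R _ _ ihP ihR =>
    obtain ⟨D, hD, hD'⟩ := ihP
    obtain ⟨F, hF, hF'⟩ := ihR
    refine ⟨fun i v Q => D i v Q + F i v Q, fun i => (hD i).add (hF i), fun Q v => ?_⟩
    refine ((hD' Q v).add (hF' Q v)).congr_fderiv ?_
    simp [add_smul, Finset.sum_add_distrib]
  | @mul P R hP hR ihP ihR =>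
    obtain ⟨D, hD, hD'⟩ := ihP
    obtain ⟨F, hF, hF'⟩ := ihR
    refine ⟨fun i v Q => P v Q * F i v Q + R v Q * D i v Q,
      fun i => (hP.mul (hF i)).add (hR.mul (hD i)), fun Q v => ?_⟩
    refine ((hD' Q v).mul (hF' Q v)).congr_fderiv ?_
    simp [add_smul, Finset.sum_add_distrib, Finset.smul_sum, smul_smul]

lemma Pol.growth {P : (ι → ℝ) → Matrix ι ι ℝ → ℝ} (h : Pol P) (q : ℝ) :
    ∃ (K : ℝ) (m : ℕ), 0 ≤ K ∧ ∀ Q v, (∀ i j, |Q i j| ≤ q) → |P v Q| ≤ K * (1 + ‖v‖) ^ m := by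
  induction h with
  | const c => exact ⟨|c|, 0, abs_nonneg _, fun Q v _ => by simp⟩
  | coord i =>
    refine ⟨1, 1, zero_le_one, fun Q v _ => ?_⟩
    have := norm_le_pi_norm v i
    rw [Real.norm_eq_abs] at this
    linarith
  | entry i j => exact ⟨|q|, 0, abs_nonneg _, fun Q v h => by simpa using (h i j).trans (le_abs_self q)⟩
  | add _ _ ihP ihR =>
    obtain ⟨K, m, hK, h⟩ := ihP
    obtain ⟨K', m', hK', h'⟩ := ihR
    refine ⟨K + K', m + m', by positivity, fun Q v hQ => ?_⟩
    have h1 : (1 : ℝ) ≤ 1 + ‖v‖ := by linarith [norm_nonneg v]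
    calc _ ≤ K * (1 + ‖v‖) ^ m + K' * (1 + ‖v‖) ^ m' :=
          (abs_add_le _ _).trans (add_le_add (h Q v hQ) (h' Q v hQ))
      _ ≤ K * (1 + ‖v‖) ^ (m + m') + K' * (1 + ‖v‖) ^ (m + m') := by
          gcongr <;> first | exact h1 | omega
      _ = _ := by ring
  | mul _ _ ihP ihR =>
    obtain ⟨K, m, hK, h⟩ := ihP
    obtain ⟨K', m', hK', h'⟩ := ihR
    refine ⟨K * K', m + m', by positivity, fun Q v hQ => ?_⟩
    rw [abs_mul]
    calc _ ≤ (K * (1 + ‖v‖) ^ m) * (K' * (1 + ‖v‖) ^ m') :=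
          mul_le_mul (h Q v hQ) (h' Q v hQ) (abs_nonneg _) (by positivity)
      _ = _ := by ring

/-- The product of a polynomial and the Gaussian weight `exp (-⟨Qv, v⟩ / 2)`. -/
def polGauss (P : (ι → ℝ) → Matrix ι ι ℝ → ℝ) (Q : Matrix ι ι ℝ) (v : ι → ℝ) : ℝ :=
  P v Q * Real.exp (-(1/2) * (Q *ᵥ v) ⬝ᵥ v)

/-- The derivative of a polynomial times the Gaussian is again of this form. -/
lemma Pol.hasFDerivAt_polGauss {P : (ι → ℝ) → Matrix ι ι ℝ → ℝ} (h : Pol P) :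
    ∃ D : ι → (ι → ℝ) → Matrix ι ι ℝ → ℝ, (∀ i, Pol (D i)) ∧ ∀ Q v,
      HasFDerivAt (polGauss P Q)
        (∑ i, polGauss (D i) Q v • ContinuousLinearMap.proj (R := ℝ) (φ := fun _ : ι => ℝ) i) v := by
  have hq : Pol fun (v : ι → ℝ) (Q : Matrix ι ι ℝ) => -(1/2) * (Q *ᵥ v) ⬝ᵥ v := by
    refine (Pol.const _).mul (Pol.sum _ fun i => ?_)
    exact (Pol.sum _ fun j => (Pol.entry i j).mul (Pol.coord j)).mul (Pol.coord i)
  obtain ⟨D, hD, hD'⟩ := h.hasFDerivAt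
  obtain ⟨F, hF, hF'⟩ := hq.hasFDerivAt
  refine ⟨fun i v Q => D i v Q + P v Q * F i v Q, fun i => (hD i).add (h.mul (hF i)),
    fun Q v => ?_⟩
  refine ((hD' Q v).mul (hF' Q v).exp).congr_fderiv ?_
  simp only [polGauss, Finset.smul_sum, smul_smul, ← Finset.sum_add_distrib, ← add_smul]
  refine Finset.sum_congr rfl fun i _ => ?_
  congr 1
  ring

/-- Rapid decay of `polGauss`, uniformly over bounded and uniformly coercive `Q`. -/
lemma Pol.decay {P : (ι → ℝ) → Matrix ι ι ℝ → ℝ} (h : Pol P) (q : ℝ) {c : ℝ} (hc : 0 < c) (N : ℕ) :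
    ∃ K : ℝ, 0 ≤ K ∧ ∀ Q : Matrix ι ι ℝ, (∀ i j, |Q i j| ≤ q) →
      (∀ v, c * ‖v‖ ^ 2 ≤ (Q *ᵥ v) ⬝ᵥ v) → ∀ v, |polGauss P Q v| * (1 + ‖v‖) ^ N ≤ K := by
  obtain ⟨K, m, hK, hP⟩ := h.growth q
  refine ⟨K * Real.exp (((m + N : ℕ) : ℝ) ^ 2 / (2 * c)), by positivity, fun Q hQ hQc v => ?_⟩
  rw [polGauss, abs_mul, Real.abs_exp]
  have hv := norm_nonneg v
  have h1 : (1 + ‖v‖) ^ (m + N) ≤ Real.exp ((m + N : ℕ) * ‖v‖) := by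
    rw [Real.exp_nat_mul]
    exact pow_le_pow_left₀ (by positivity) (by linarith [Real.add_one_le_exp ‖v‖]) _
  -- completing the square in `n ‖v‖ - c ‖v‖² / 2`
  have h2 : ((m + N : ℕ) : ℝ) * ‖v‖ + -(1/2) * (Q *ᵥ v) ⬝ᵥ v ≤ ((m + N : ℕ) : ℝ) ^ 2 / (2 * c) := by
    rw [le_div_iff₀ (by positivity)]
    nlinarith [sq_nonneg (((m + N : ℕ) : ℝ) - c * ‖v‖), hQc v]
  calc _ ≤ K * (1 + ‖v‖) ^ m * Real.exp (-(1/2) * (Q *ᵥ v) ⬝ᵥ v) * (1 + ‖v‖) ^ N := by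
        gcongr; exact hP Q v hQ
    _ = K * ((1 + ‖v‖) ^ (m + N) * Real.exp (-(1/2) * (Q *ᵥ v) ⬝ᵥ v)) := by ring
    _ ≤ K * (Real.exp ((m + N : ℕ) * ‖v‖) * Real.exp (-(1/2) * (Q *ᵥ v) ⬝ᵥ v)) := by gcongr
    _ ≤ _ := by rw [← Real.exp_add]; gcongr

/-! ### Differentiation under the integral sign -/

lemma integrable_decay (m : ℕ) :
    Integrable fun z : ι → ℝ => ((1 + ‖z‖) ^ (Fintype.card ι + 1 + m))⁻¹ * (1 + ‖z‖) ^ m := by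
  have h := integrable_one_add_norm (E := ι → ℝ) (μ := volume)
    (r := ((Fintype.card ι + 1 : ℕ) : ℝ)) (by simp)
  refine h.congr (Filter.Eventually.of_forall fun z => ?_)
  have : (0 : ℝ) < 1 + ‖z‖ := by positivity
  simp only
  rw [Real.rpow_neg this.le, Real.rpow_natCast, pow_add]
  generalize 1 + ‖z‖ = y at *
  field_simp
  ring

/-- `1 + ‖·‖` is submultiplicative under translations. -/
lemma one_add_norm_le (z a : ι → ℝ) : 1 + ‖z‖ ≤ (1 + ‖z - a‖) * (1 + ‖a‖) := by
  have h := norm_add_le (z - a) a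
  rw [sub_add_cancel] at h
  nlinarith [norm_nonneg (z - a), norm_nonneg a, mul_nonneg (norm_nonneg (z - a)) (norm_nonneg a)]

lemma decay_translate {x K A : ℝ} {N : ℕ} {z a : ι → ℝ} (ha : 1 + ‖a‖ ≤ A)
    (h : |x| * (1 + ‖z - a‖) ^ N ≤ K) : |x| ≤ K * A ^ N * ((1 + ‖z‖) ^ N)⁻¹ := by
  have hz : (0 : ℝ) < 1 + ‖z‖ := by positivity
  have hza : (0 : ℝ) < 1 + ‖z - a‖ := by positivity
  have hA : (0 : ℝ) ≤ A := le_trans (by positivity) ha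
  rw [← div_eq_mul_inv, le_div_iff₀ (by positivity)]
  calc |x| * (1 + ‖z‖) ^ N ≤ |x| * ((1 + ‖z - a‖) * A) ^ N := by
        gcongr
        exact (one_add_norm_le z a).trans (by gcongr)
    _ = |x| * (1 + ‖z - a‖) ^ N * A ^ N := by rw [mul_pow, mul_assoc]
    _ ≤ _ := by gcongr

lemma hasFDerivAt_conv {h : (ι → ℝ) → ℝ} {h' : (ι → ℝ) → (ι → ℝ) →L[ℝ] ℝ}
    (hd : ∀ v, HasFDerivAt h (h' v) v) (hc : Continuous h') {m : ℕ} {K Kφ : ℝ}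
    (hK : ∀ v, |h v| * (1 + ‖v‖) ^ (Fintype.card ι + 1 + m) ≤ K)
    (hK' : ∀ v, ‖h' v‖ * (1 + ‖v‖) ^ (Fintype.card ι + 1 + m) ≤ K)
    {φ : (ι → ℝ) → ℝ} (hφc : Continuous φ) (hφ : ∀ z, |φ z| ≤ Kφ * (1 + ‖z‖) ^ m)
    (L : (ι → ℝ) →L[ℝ] (ι → ℝ)) (w : ι → ℝ) (e : ι → ℝ) :
    DifferentiableAt ℝ (fun w => ∫ z, h (z - L w) * φ z) w ∧
    fderiv ℝ (fun w => ∫ z, h (z - L w) * φ z) w e = ∫ z, -(h' (z - L w) (L e)) * φ z := by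
  have hcont : Continuous h := continuous_iff_continuousAt.2 fun v => (hd v).continuousAt
  have hK0 : 0 ≤ K := le_trans (by positivity) (hK 0)
  have hKφ : 0 ≤ Kφ := by
    have := (abs_nonneg _).trans (hφ 0)
    simpa using this
  set N := Fintype.card ι + 1 + m
  set A : ℝ := 1 + ‖L‖ * (‖w‖ + 1)
  have hA : ∀ x ∈ Metric.ball w 1, 1 + ‖L x‖ ≤ A := by
    intro x hx
    have h1 : ‖x‖ ≤ ‖w‖ + 1 := by
      have := norm_add_le (x - w) w
      rw [sub_add_cancel] at this
      have h2 : ‖x - w‖ < 1 := by simpa [dist_eq_norm] using hx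
      linarith
    have := (L.le_opNorm x).trans (mul_le_mul_of_nonneg_left h1 (norm_nonneg L))
    simp only [A]; linarith
  have hA0 : 0 ≤ A := by positivity
  let F' : (ι → ℝ) → (ι → ℝ) → (ι → ℝ) →L[ℝ] ℝ := fun x z => φ z • (-((h' (z - L x)).comp L))
  have hF'c : Continuous (F' w) := by
    have : Continuous fun z => (h' (z - L w)).comp L :=
      (hc.comp (continuous_id.sub continuous_const)).clm_comp continuous_const
    exact hφc.smul this.neg
  have hint : Integrable fun z : ι → ℝ =>
      (K * A ^ N * ‖L‖ * Kφ) * (((1 + ‖z‖) ^ N)⁻¹ * (1 + ‖z‖) ^ m) :=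
    (integrable_decay m).const_mul _
  have hint0 : Integrable fun z : ι → ℝ =>
      (K * A ^ N * Kφ) * (((1 + ‖z‖) ^ N)⁻¹ * (1 + ‖z‖) ^ m) :=
    (integrable_decay m).const_mul _
  have hFc : ∀ x, Continuous fun z => h (z - L x) * φ z := fun x =>
    (hcont.comp (continuous_id.sub continuous_const)).mul hφc
  have hbd : ∀ z, ∀ x ∈ Metric.ball w 1,
      ‖F' x z‖ ≤ (K * A ^ N * ‖L‖ * Kφ) * (((1 + ‖z‖) ^ N)⁻¹ * (1 + ‖z‖) ^ m) := by
    intro z x hx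
    have h1 := decay_translate (x := ‖h' (z - L x)‖) (K := K) (N := N) (z := z) (hA x hx) (by
      rw [abs_of_nonneg (norm_nonneg _)]; exact hK' (z - L x))
    rw [abs_of_nonneg (norm_nonneg _)] at h1
    calc ‖F' x z‖ = |φ z| * ‖(h' (z - L x)).comp L‖ := by
          simp only [F', norm_smul, norm_neg, Real.norm_eq_abs]
      _ ≤ (Kφ * (1 + ‖z‖) ^ m) * ((K * A ^ N * ((1 + ‖z‖) ^ N)⁻¹) * ‖L‖) := by
          gcongr
          · exact hφ z
          · exact (ContinuousLinearMap.opNorm_comp_le _ _).trans (by gcongr)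
      _ = _ := by ring
  have key := hasFDerivAt_integral_of_dominated_of_fderiv_le (𝕜 := ℝ) (μ := volume)
    (F := fun x z => h (z - L x) * φ z) (F' := F') (x₀ := w) (s := Metric.ball w 1)
    (bound := fun z => (K * A ^ N * ‖L‖ * Kφ) * (((1 + ‖z‖) ^ N)⁻¹ * (1 + ‖z‖) ^ m))
    (Metric.ball_mem_nhds w one_pos)
    (Filter.Eventually.of_forall fun x => (hFc x).aestronglyMeasurable)
    (hint0.mono' (hFc w).aestronglyMeasurable (Filter.Eventually.of_forall fun z => by
      have h1 := decay_translate (hA w (Metric.mem_ball_self one_pos)) (hK (z - L w))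
      rw [Real.norm_eq_abs, abs_mul]
      calc _ ≤ (K * A ^ N * ((1 + ‖z‖) ^ N)⁻¹) * (Kφ * (1 + ‖z‖) ^ m) :=
            mul_le_mul h1 (hφ z) (abs_nonneg _) (by positivity)
        _ = _ := by ring))
    hF'c.aestronglyMeasurable
    (Filter.Eventually.of_forall hbd) hint
    (Filter.Eventually.of_forall fun z x _ => by
      have h1 : HasFDerivAt (fun x => z - L x) (-L) x := L.hasFDerivAt.const_sub z
      have h2 := ((hd (z - L x)).comp x h1).mul_const (φ z)
      refine h2.congr_fderiv ?_
      ext u; simp [F'])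
  refine ⟨key.differentiableAt, ?_⟩
  have hF'int : Integrable (F' w) := hint.mono' hF'c.aestronglyMeasurable
    (Filter.Eventually.of_forall fun z => hbd z w (Metric.mem_ball_self one_pos))
  rw [key.fderiv, ContinuousLinearMap.integral_apply hF'int]
  refine integral_congr_ae (Filter.Eventually.of_forall fun z => ?_)
  simp [F']; ring

end Analysis

/-! ### Iterated derivatives of Gaussian integrals -/

section Derivatives

/-- The convolution `x ↦ a ∫ h(z - E(δ x)) φ(z) dz` of `φ` with `h = polGauss P Q`, where `δ x` is
the coordinatewise product. -/
def polConv (E : Matrix (Idx r p) (Idx r p) ℝ) (Q : Matrix (Idx r p) (Idx r p) ℝ)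
    (φ : (Idx r p → ℝ) → ℝ) (δ : Idx r p → ℝ) (a : ℝ)
    (P : (Idx r p → ℝ) → Matrix (Idx r p) (Idx r p) ℝ → ℝ) (x : Idx r p → ℝ) : ℝ :=
  a * ∫ z, polGauss P Q (z - E *ᵥ (δ * x)) * φ z

/-- Continuity and polynomial growth. -/
def Tempered (φ : (Idx r p → ℝ) → ℝ) : Prop :=
  Continuous φ ∧ ∃ (K : ℝ) (m : ℕ), ∀ z, |φ z| ≤ K * (1 + ‖z‖) ^ m

/-- Strict positivity of the quadratic form `⟨Qv, v⟩`, in quantitative form. -/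
def Coercive (Q : Matrix (Idx r p) (Idx r p) ℝ) : Prop :=
  ∃ c > 0, ∀ v, c * ‖v‖ ^ 2 ≤ (Q *ᵥ v) ⬝ᵥ v

lemma abs_entry_le_sum (Q : Matrix (Idx r p) (Idx r p) ℝ) (i j : Idx r p) :
    |Q i j| ≤ ∑ i, ∑ j, |Q i j| :=
  (Finset.single_le_sum (f := fun j => |Q i j|) (fun _ _ => abs_nonneg _) (mem_univ j)).trans
    (Finset.single_le_sum (f := fun i => ∑ j, |Q i j|)
      (fun _ _ => Finset.sum_nonneg fun _ _ => abs_nonneg _) (mem_univ i))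

lemma pdx_polConv (E : Matrix (Idx r p) (Idx r p) ℝ) (i : Idx r p)
    {P : (Idx r p → ℝ) → Matrix (Idx r p) (Idx r p) ℝ → ℝ} (hP : Pol P) :
    ∃ P', Pol P' ∧ ∀ Q φ δ a, Coercive Q → Tempered φ →
      pdx i (polConv E Q φ δ a P) = polConv E Q φ δ (a * δ i) P' := by
  obtain ⟨D, hD, hD'⟩ := hP.hasFDerivAt_polGauss
  refine ⟨fun v Q => ∑ j, (-(E j i)) * D j v Q,
    Pol.sum _ fun j => (Pol.const _).mul (hD j), fun Q φ δ a hQ hφ => ?_⟩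
  obtain ⟨c, hc, hQ⟩ := hQ
  obtain ⟨hφc, Kφ, m, hφ⟩ := hφ
  set N := Fintype.card (Idx r p) + 1 + m with hN
  obtain ⟨K, hK0, hK⟩ := hP.decay (∑ i, ∑ j, |Q i j|) hc N
  have hK := hK Q (abs_entry_le_sum Q) hQ
  choose KD hKD0 hKD using fun j => (hD j).decay (∑ i, ∑ j, |Q i j|) hc N
  have hKD := fun j => hKD j Q (abs_entry_le_sum Q) hQ
  set h' : (Idx r p → ℝ) → (Idx r p → ℝ) →L[ℝ] ℝ := fun v =>
    ∑ j, polGauss (D j) Q v • ContinuousLinearMap.proj (R := ℝ) (φ := fun _ : Idx r p => ℝ) j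
    with hh'
  have hcont : Continuous h' := by
    refine continuous_finsetSum _ fun j _ => Continuous.smul (f := polGauss (D j) Q) ?_ continuous_const
    obtain ⟨_, _, hF⟩ := (hD j).hasFDerivAt_polGauss
    exact continuous_iff_continuousAt.2 fun v => (hF Q v).continuousAt
  have hproj : ∀ j, ‖ContinuousLinearMap.proj (R := ℝ) (φ := fun _ : Idx r p => ℝ) j‖ ≤ 1 :=
    fun j => ContinuousLinearMap.opNorm_le_bound _ zero_le_one fun v => by
      simpa using norm_le_pi_norm v j
  have hbd : ∀ v, ‖h' v‖ * (1 + ‖v‖) ^ N ≤ ∑ j, KD j := by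
    intro v
    have h1 : ‖h' v‖ ≤ ∑ j, |polGauss (D j) Q v| := by
      refine (norm_sum_le _ _).trans (Finset.sum_le_sum fun j _ => ?_)
      rw [norm_smul, Real.norm_eq_abs]
      exact mul_le_of_le_one_right (abs_nonneg _) (hproj j)
    calc _ ≤ (∑ j, |polGauss (D j) Q v|) * (1 + ‖v‖) ^ N := by gcongr
      _ = ∑ j, |polGauss (D j) Q v| * (1 + ‖v‖) ^ N := Finset.sum_mul _ _ _
      _ ≤ _ := Finset.sum_le_sum fun j _ => hKD j v
  have hS : 0 ≤ ∑ j, KD j := Finset.sum_nonneg fun j _ => hKD0 j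
  let L : (Idx r p → ℝ) →L[ℝ] (Idx r p → ℝ) :=
    LinearMap.toContinuousLinearMap (Matrix.toLin' (E * Matrix.diagonal δ))
  have hL : ∀ x, L x = E *ᵥ (δ * x) := by
    intro x
    have : Matrix.diagonal δ *ᵥ x = δ * x := by ext j; simp [Matrix.mulVec_diagonal]
    simp [L, this]
  have hLe : ∀ j, L (Pi.single i 1) j = E j i * δ i := by
    intro j
    simp [L]
  funext x
  obtain ⟨hdiff, hfd⟩ := hasFDerivAt_conv (hD' Q) hcont (m := m) (K := K + ∑ j, KD j)
    (fun v => (hK v).trans (by linarith)) (fun v => (hbd v).trans (by linarith))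
    hφc hφ L x (Pi.single i 1)
  have e1 : polConv E Q φ δ a P = fun x => a * ∫ z, polGauss P Q (z - L x) * φ z := by
    funext y; simp only [polConv, hL]
  rw [pdx, e1, fderiv_const_mul hdiff, _root_.smul_apply, hfd, polConv, smul_eq_mul,
    mul_assoc, ← integral_const_mul (δ i)]
  congr 1
  refine integral_congr_ae (Filter.Eventually.of_forall fun z => ?_)
  have hsum : h' (z - L x) (L (Pi.single i 1)) =
      ∑ j, polGauss (D j) Q (z - L x) * (E j i * δ i) := by
    simp [hh', _root_.sum_apply, hLe]
  change -(h' (z - L x) (L (Pi.single i 1))) * φ z = δ i * (polGauss _ Q (z - E *ᵥ (δ * x)) * φ z)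
  rw [hsum, ← hL x]
  simp only [polGauss, Finset.sum_mul, Finset.mul_sum, ← Finset.sum_neg_distrib]
  refine Finset.sum_congr rfl fun j _ => ?_
  ring

lemma pdx_iterate_polConv (E : Matrix (Idx r p) (Idx r p) ℝ) (i : Idx r p) (n : ℕ)
    {P : (Idx r p → ℝ) → Matrix (Idx r p) (Idx r p) ℝ → ℝ} (hP : Pol P) :
    ∃ P', Pol P' ∧ ∀ Q φ δ a, Coercive Q → Tempered φ →
      (pdx i)^[n] (polConv E Q φ δ a P) = polConv E Q φ δ (a * δ i ^ n) P' := by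
  induction n with
  | zero => exact ⟨P, hP, fun Q φ δ a _ _ => by simp⟩
  | succ n ih =>
    obtain ⟨P₁, hP₁, h₁⟩ := ih
    obtain ⟨P₂, hP₂, h₂⟩ := pdx_polConv E i hP₁
    refine ⟨P₂, hP₂, fun Q φ δ a hQ hφ => ?_⟩
    rw [Function.iterate_succ_apply', h₁ Q φ δ a hQ hφ, h₂ Q φ δ _ hQ hφ, pow_succ, mul_assoc]

/-- `D^β` of a Gaussian integral replaces the polynomial factor `1` by one depending on `β` and `E`
alone, and produces the factor `δ^β`. -/
lemma Dx_polConv (E : Matrix (Idx r p) (Idx r p) ℝ) (β : Idx r p → ℕ) :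
    ∃ P', Pol P' ∧ ∀ Q φ δ a, Coercive Q → Tempered φ →
      Dx β (polConv E Q φ δ a fun _ _ => 1) = polConv E Q φ δ (a * ∏ i, δ i ^ β i) P' := by
  have key : ∀ l : List (Idx r p), ∃ P', Pol P' ∧ ∀ Q φ δ a, Coercive Q → Tempered φ →
      l.foldr (fun i g => (pdx i)^[β i] g) (polConv E Q φ δ a fun _ _ => 1) =
        polConv E Q φ δ (a * (l.map fun i => δ i ^ β i).prod) P' := by
    intro l
    induction l with
    | nil => exact ⟨_, Pol.const 1, fun Q φ δ a _ _ => by simp⟩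
    | cons i l ih =>
      obtain ⟨P₁, hP₁, h₁⟩ := ih
      obtain ⟨P₂, hP₂, h₂⟩ := pdx_iterate_polConv E i (β i) hP₁
      refine ⟨P₂, hP₂, fun Q φ δ a hQ hφ => ?_⟩
      rw [List.foldr_cons, h₁ Q φ δ a hQ hφ, h₂ Q φ δ _ hQ hφ, List.map_cons, List.prod_cons,
        mul_assoc, mul_comm (List.prod _)]
  obtain ⟨P', hP', h⟩ := key (Finset.univ (α := Idx r p)).toList
  refine ⟨P', hP', fun Q φ δ a hQ hφ => ?_⟩
  rw [Dx, h Q φ δ a hQ hφ, Finset.prod_map_toList]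

lemma Dx_const {β : Idx r p → ℕ} (hβ : 0 < bwt β) (c : ℝ) :
    Dx β (fun _ : Idx r p → ℝ => c) = fun _ => 0 := by
  have hpd : ∀ (i : Idx r p) (c : ℝ), pdx i (fun _ : Idx r p → ℝ => c) = fun _ => 0 := by
    intro i c; funext x; simp [pdx]
  have hit : ∀ (i : Idx r p) (n : ℕ) (c : ℝ), ∃ c', (pdx i)^[n] (fun _ : Idx r p → ℝ => c) =
      (fun _ => c') ∧ (0 < n ∨ c = 0 → c' = 0) := by
    intro i n c
    induction n with
    | zero => exact ⟨c, rfl, by simp⟩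
    | succ n ih =>
      obtain ⟨c', h, -⟩ := ih
      exact ⟨0, by rw [Function.iterate_succ_apply', h, hpd], fun _ => rfl⟩
  have key : ∀ l : List (Idx r p), ∃ c', l.foldr (fun i g => (pdx i)^[β i] g)
      (fun _ : Idx r p → ℝ => c) = (fun _ => c') ∧ ((∃ i ∈ l, 0 < β i) → c' = 0) := by
    intro l
    induction l with
    | nil => exact ⟨c, rfl, by simp⟩
    | cons i l ih =>
      obtain ⟨c₁, h₁, h₁'⟩ := ih
      obtain ⟨c₂, h₂, h₂'⟩ := hit i (β i) c₁
      refine ⟨c₂, by rw [List.foldr_cons, h₁, h₂], ?_⟩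
      rintro ⟨j, hj, hj'⟩
      rcases List.mem_cons.1 hj with rfl | hj
      · exact h₂' (Or.inl hj')
      · exact h₂' (Or.inr (h₁' ⟨j, hj, hj'⟩))
  obtain ⟨c', h, h'⟩ := key (Finset.univ (α := Idx r p)).toList
  obtain ⟨i, -, hi⟩ := Finset.exists_ne_zero_of_sum_ne_zero hβ.ne'
  rw [Dx, h, h' ⟨i, by simp, Nat.pos_of_ne_zero fun h0 => hi (by simp [h0])⟩]

end Derivatives

/-! ### Bounds for intrinsically Hölder data -/

section Holder

lemma hnorm_nonneg (v : Idx r p → ℝ) : 0 ≤ hnorm v :=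
  Finset.sum_nonneg fun _ _ => Real.rpow_nonneg (abs_nonneg _) _

lemma one_div_sigmaWt_pos (j : Idx r p) : (0 : ℝ) < 1 / (sigmaWt j : ℝ) := by
  have : 0 < sigmaWt j := by unfold sigmaWt; omega
  positivity

lemma hnorm_rpow_le {k : ℝ} (hk : 0 ≤ k) (v : Idx r p → ℝ) :
    hnorm v ^ k ≤ (Fintype.card (Idx r p) : ℝ) ^ k * (1 + ‖v‖) ^ ⌈k⌉₊ := by
  have h1 : (1 : ℝ) ≤ 1 + ‖v‖ := by linarith [norm_nonneg v]
  have h2 : hnorm v ≤ (Fintype.card (Idx r p) : ℝ) * (1 + ‖v‖) := by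
    unfold hnorm
    calc _ ≤ ∑ _j : Idx r p, (1 + ‖v‖) := by
          refine Finset.sum_le_sum fun j _ => ?_
          have hs : 1 / (sigmaWt j : ℝ) ≤ 1 := by
            rw [div_le_one (by exact_mod_cast (by unfold sigmaWt; omega : 0 < sigmaWt j))]
            exact_mod_cast (by unfold sigmaWt; omega : 1 ≤ sigmaWt j)
          have hv : |v j| ≤ 1 + ‖v‖ := by
            have := norm_le_pi_norm v j
            rw [Real.norm_eq_abs] at this
            linarith
          calc |v j| ^ (1 / (sigmaWt j : ℝ)) ≤ (1 + ‖v‖) ^ (1 / (sigmaWt j : ℝ)) :=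
                Real.rpow_le_rpow (abs_nonneg _) hv (one_div_sigmaWt_pos j).le
            _ ≤ (1 + ‖v‖) ^ (1 : ℝ) := Real.rpow_le_rpow_of_exponent_le h1 hs
            _ = _ := Real.rpow_one _
      _ = _ := by rw [Finset.sum_const, Finset.card_univ, nsmul_eq_mul]
  calc hnorm v ^ k ≤ ((Fintype.card (Idx r p) : ℝ) * (1 + ‖v‖)) ^ k :=
        Real.rpow_le_rpow (hnorm_nonneg v) h2 hk
    _ = (Fintype.card (Idx r p) : ℝ) ^ k * (1 + ‖v‖) ^ k :=
        Real.mul_rpow (by positivity) (by positivity)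
    _ ≤ _ := by
        gcongr
        rw [← Real.rpow_natCast]
        exact Real.rpow_le_rpow_of_exponent_le h1 (Nat.le_ceil k)

lemma tempered_of_holder {k H : ℝ} (hk : 0 ≤ k) (hH : 0 ≤ H) {φ : (Idx r p → ℝ) → ℝ}
    (hc : Continuous φ) (hφ : ∀ z z', |φ z - φ z'| ≤ H * hnorm (z - z') ^ k) : Tempered φ := by
  refine ⟨hc, |φ 0| + H * (Fintype.card (Idx r p) : ℝ) ^ k, ⌈k⌉₊, fun z => ?_⟩
  have h1 : (1 : ℝ) ≤ (1 + ‖z‖) ^ ⌈k⌉₊ := one_le_pow₀ (by linarith [norm_nonneg z])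
  have h2 := hφ z 0
  rw [sub_zero] at h2
  have h3 := mul_le_mul_of_nonneg_left (hnorm_rpow_le hk z) hH
  have h4 : |φ z| ≤ |φ 0| + |φ z - φ 0| := by
    have := abs_add_le (φ 0) (φ z - φ 0)
    rwa [add_sub_cancel] at this
  nlinarith [mul_le_mul_of_nonneg_left h1 (abs_nonneg (φ 0))]

lemma continuous_hnorm : Continuous (hnorm : (Idx r p → ℝ) → ℝ) := by
  unfold hnorm
  exact continuous_finsetSum _ fun j _ =>
    ((continuous_apply j).abs).rpow_const fun _ => Or.inr (one_div_sigmaWt_pos j).le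

lemma continuous_of_holder {k H : ℝ} (hk : 0 < k) {φ : (Idx r p → ℝ) → ℝ}
    (hφ : ∀ z z', |φ z - φ z'| ≤ H * hnorm (z - z') ^ k) : Continuous φ := by
  refine continuous_iff_continuousAt.2 fun z' => ?_
  have h0 : hnorm (0 : Idx r p → ℝ) = 0 := by
    unfold hnorm
    exact Finset.sum_eq_zero fun j _ => by
      simp [Real.zero_rpow (inv_ne_zero (by unfold sigmaWt; positivity : (sigmaWt j : ℝ) ≠ 0))]
  have hlim : Filter.Tendsto (fun z => H * hnorm (z - z') ^ k) (nhds z') (nhds 0) := by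
    have : Continuous fun z => H * hnorm (z - z') ^ k :=
      continuous_const.mul ((continuous_hnorm.comp (continuous_id.sub continuous_const)).rpow_const
        fun _ => Or.inr hk.le)
    have h := this.tendsto z'
    simpa [h0, Real.zero_rpow hk.ne'] using h
  rw [ContinuousAt, tendsto_iff_dist_tendsto_zero]
  exact squeeze_zero (fun _ => dist_nonneg) (fun z => by rw [Real.dist_eq]; exact hφ z z') hlim

/-- If `polGauss P Q` has mean zero, one may subtract `φ(y)` under the integral, so only the
oscillation of `φ` around `y` enters the bound. -/
lemma abs_integral_polGauss_le {P : (Idx r p → ℝ) → Matrix (Idx r p) (Idx r p) ℝ → ℝ}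
    (hP : Pol P) (q : ℝ) {c : ℝ} (hc : 0 < c) {k : ℝ} (hk : 0 ≤ k) :
    ∃ K : ℝ, 0 ≤ K ∧ ∀ Q : Matrix (Idx r p) (Idx r p) ℝ, (∀ i j, |Q i j| ≤ q) →
      (∀ v, c * ‖v‖ ^ 2 ≤ (Q *ᵥ v) ⬝ᵥ v) → ∫ z, polGauss P Q z = 0 →
      ∀ (φ : (Idx r p → ℝ) → ℝ) (H : ℝ), 0 ≤ H → Continuous φ →
      (∀ z z', |φ z - φ z'| ≤ H * hnorm (z - z') ^ k) →
      ∀ y, |∫ z, polGauss P Q (z - y) * φ z| ≤ K * H := by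
  set m := ⌈k⌉₊
  set n := Fintype.card (Idx r p) with hn
  obtain ⟨K, hK0, hK⟩ := hP.decay q hc (n + 1 + m)
  set J := ∫ z : Idx r p → ℝ, ((1 + ‖z‖) ^ (n + 1 + m))⁻¹ * (1 + ‖z‖) ^ m
  have hJ : 0 ≤ J := integral_nonneg fun z => by positivity
  refine ⟨K * (n : ℝ) ^ k * J, by positivity, fun Q hQ hQc h0 φ H hH hφc hφ y => ?_⟩
  have hcont : Continuous (polGauss P Q) := by
    obtain ⟨_, _, hF⟩ := hP.hasFDerivAt_polGauss
    exact continuous_iff_continuousAt.2 fun v => (hF Q v).continuousAt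
  have hdec : ∀ v, |polGauss P Q v| ≤ K * ((1 + ‖v‖) ^ (n + 1 + m))⁻¹ := fun v => by
    rw [← div_eq_mul_inv, le_div_iff₀ (by positivity)]
    exact hK Q hQ hQc v
  have hone : ∀ v : Idx r p → ℝ, (1 : ℝ) ≤ (1 + ‖v‖) ^ m :=
    fun v => one_le_pow₀ (by linarith [norm_nonneg v])
  have hint : Integrable (polGauss P Q) := by
    refine ((integrable_decay (ι := Idx r p) m).const_mul K).mono' hcont.aestronglyMeasurable
      (Filter.Eventually.of_forall fun v => ?_)
    rw [Real.norm_eq_abs, ← mul_assoc]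
    refine (hdec v).trans (le_mul_of_one_le_right (by positivity) (hone v))
  have hbd : ∀ v, |polGauss P Q v * (φ (v + y) - φ y)| ≤
      (K * (n : ℝ) ^ k * H) * (((1 + ‖v‖) ^ (n + 1 + m))⁻¹ * (1 + ‖v‖) ^ m) := by
    intro v
    have h1 : |φ (v + y) - φ y| ≤ H * ((n : ℝ) ^ k * (1 + ‖v‖) ^ m) := by
      have := hφ (v + y) y
      rw [add_sub_cancel_right] at this
      exact this.trans (mul_le_mul_of_nonneg_left (hnorm_rpow_le hk v) hH)
    rw [abs_mul]
    calc _ ≤ (K * ((1 + ‖v‖) ^ (n + 1 + m))⁻¹) * (H * ((n : ℝ) ^ k * (1 + ‖v‖) ^ m)) :=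
          mul_le_mul (hdec v) h1 (abs_nonneg _) (by positivity)
      _ = _ := by ring
  have hi2 : Integrable fun v => polGauss P Q v * (φ (v + y) - φ y) :=
    ((integrable_decay (ι := Idx r p) m).const_mul (K * (n : ℝ) ^ k * H)).mono'
      (hcont.mul ((hφc.comp (continuous_id.add continuous_const)).sub
        continuous_const)).aestronglyMeasurable (Filter.Eventually.of_forall hbd)
  have e1 : ∫ z, polGauss P Q (z - y) * φ z = ∫ v, polGauss P Q v * (φ (v + y) - φ y) := by
    rw [← integral_add_right_eq_self (μ := volume) _ y]
    have : ∀ v, polGauss P Q (v + y - y) * φ (v + y) =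
        polGauss P Q v * (φ (v + y) - φ y) + polGauss P Q v * φ y := fun v => by
      rw [add_sub_cancel_right]; ring
    simp_rw [this]
    rw [integral_add hi2 (hint.mul_const _), integral_mul_const, h0, zero_mul, add_zero]
  rw [e1]
  calc _ ≤ ∫ v, (K * (n : ℝ) ^ k * H) * (((1 + ‖v‖) ^ (n + 1 + m))⁻¹ * (1 + ‖v‖) ^ m) :=
        norm_integral_le_of_norm_le (f := fun v => polGauss P Q v * (φ (v + y) - φ y))
          ((integrable_decay (ι := Idx r p) m).const_mul _) (Filter.Eventually.of_forall hbd)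
    _ = _ := by rw [integral_const_mul]; ring

/-- The derivative bound in the scaled variables. The polynomial produced by `D^β` has mean zero
against the Gaussian because `D^β` kills the constant `∫ exp (-⟨Q(z - x), z - x⟩ / 2) dz`. -/
lemma abs_Dx_polConv_le (E : Matrix (Idx r p) (Idx r p) ℝ) {β : Idx r p → ℕ} (hβ : 0 < bwt β)
    (q : ℝ) {c : ℝ} (hc : 0 < c) {k : ℝ} (hk : 0 ≤ k) :
    ∃ K : ℝ, 0 ≤ K ∧ ∀ Q : Matrix (Idx r p) (Idx r p) ℝ, (∀ i j, |Q i j| ≤ q) →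
      (∀ v, c * ‖v‖ ^ 2 ≤ (Q *ᵥ v) ⬝ᵥ v) →
      ∀ (φ : (Idx r p → ℝ) → ℝ) (H : ℝ), 0 ≤ H → Continuous φ →
      (∀ z z', |φ z - φ z'| ≤ H * hnorm (z - z') ^ k) →
      ∀ δ a x, |Dx β (polConv E Q φ δ a fun _ _ => 1) x| ≤ |a * ∏ i, δ i ^ β i| * (K * H) := by
  obtain ⟨P', hP', h⟩ := Dx_polConv E β
  obtain ⟨K, hK0, hK⟩ := abs_integral_polGauss_le hP' q hc hk
  refine ⟨K, hK0, fun Q hQ hQc φ H hH hφc hφ δ a x => ?_⟩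
  have hco : Coercive Q := ⟨c, hc, hQc⟩
  have h0 : ∫ z, polGauss P' Q z = 0 := by
    have h1 := h Q (fun _ => 1) 1 1 hco ⟨continuous_const, 1, 0, fun z => by simp⟩
    have h2 : polConv E Q (fun _ => 1) 1 1 (fun _ _ => 1) =
        fun _ => ∫ z, polGauss (fun _ _ => 1) Q z := by
      funext x
      simp only [polConv, mul_one, one_mul]
      exact integral_sub_right_eq_self (polGauss (fun _ _ => 1) Q) _
    rw [h2, Dx_const hβ] at h1
    simpa [polConv] using (congrFun h1 0).symm
  rw [h Q φ δ a hco (tempered_of_holder hk hH hφc hφ), polConv, abs_mul]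
  gcongr
  exact hK Q hQ hQc h0 φ H hH hφc hφ _

end Holder

/-! ### The covariance matrix -/

section Covariance

open scoped Matrix.Norms.Operator in
lemma mexp_eq (X : Matrix (Idx r p) (Idx r p) ℝ) : mexp X = NormedSpace.exp X := by
  have hs := NormedSpace.expSeries_summable' (𝕂 := ℝ) X
  ext i j
  rw [NormedSpace.exp_eq_tsum ℝ, mexp, Matrix.of_apply]
  have h := hs.hasSum
  have h2 := Pi.hasSum.1 (Pi.hasSum.1 h i) j
  exact h2.tsum_eq

open scoped Matrix.Norms.Operator in
lemma hasDerivAt_mexp_smul (B : Matrix (Idx r p) (Idx r p) ℝ) (s : ℝ) (i j : Idx r p) :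
    HasDerivAt (fun s : ℝ => mexp (s • B) i j) ((mexp (s • B) * B) i j) s := by
  simp_rw [mexp_eq]
  have h := hasDerivAt_exp_smul_const (𝕂 := ℝ) B s
  let ℓ : Matrix (Idx r p) (Idx r p) ℝ →L[ℝ] ℝ := LinearMap.toContinuousLinearMap
    { toFun := fun X => X i j, map_add' := fun _ _ => rfl, map_smul' := fun _ _ => rfl }
  exact ℓ.hasFDerivAt.comp_hasDerivAt s h

lemma hasDerivAt_transpose_mulVec (B : Matrix (Idx r p) (Idx r p) ℝ) (v : Idx r p → ℝ) (s : ℝ)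
    (k : Idx r p) : HasDerivAt (fun s : ℝ => ((mexp (s • B))ᵀ *ᵥ v) k)
      ((Bᵀ *ᵥ ((mexp (s • B))ᵀ *ᵥ v)) k) s := by
  rw [Matrix.mulVec_mulVec, ← Matrix.transpose_mul]
  simp only [Matrix.mulVec, dotProduct, Matrix.transpose_apply]
  exact HasDerivAt.fun_sum fun j _ => (hasDerivAt_mexp_smul B s j k).mul_const (v j)

lemma continuous_mexp_smul (B : Matrix (Idx r p) (Idx r p) ℝ) :
    Continuous fun s : ℝ => mexp (s • B) :=
  continuous_matrix fun i j =>
    continuous_iff_continuousAt.2 fun s => (hasDerivAt_mexp_smul B s i j).continuousAt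

lemma block_injective {m n : ℕ} (X : Matrix (Fin m) (Fin n) ℝ) (hX : X.rank = m)
    (g : Fin m → ℝ) (hg : ∀ b, ∑ a, X a b * g a = 0) : g = 0 := by
  have hli : LinearIndependent ℝ X.row := by
    rw [linearIndependent_iff_card_eq_finrank_span, Fintype.card_fin, Set.finrank,
      ← Matrix.rank_eq_finrank_span_row, hX]
  refine Matrix.vecMul_injective_iff.2 hli ?_
  ext b
  simpa [Matrix.vecMul, dotProduct, mul_comm] using hg b

/-- Kalman's observability: if the first group of `e^{sBᵀ} v` vanishes for `s` in an interval then
`v = 0`. Differentiating in `s` passes from one group to the next, since the transposed blocks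
of `B` are injective. -/
lemma kalman {B : Matrix (Idx r p) (Idx r p) ℝ} (hB : IsKolB B) (v : Idx r p → ℝ)
    (h : ∀ s ∈ Set.Ioo (0 : ℝ) 1, ∀ i : Idx r p, (i.1 : ℕ) = 0 →
      ((mexp (s • B))ᵀ *ᵥ v) i = 0) : v = 0 := by
  have key : ∀ n : ℕ, ∀ s ∈ Set.Ioo (0 : ℝ) 1, ∀ i : Idx r p, (i.1 : ℕ) = n →
      ((mexp (s • B))ᵀ *ᵥ v) i = 0 := by
    intro n
    induction n with
    | zero => exact h
    | succ n ih =>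
      rintro s hs ⟨i, a⟩ (hi : (i : ℕ) = n + 1)
      let k : Fin (r + 1) := ⟨n, by omega⟩
      have hg := block_injective _ (hB.rk i k hi)
        (fun a => ((mexp (s • B))ᵀ *ᵥ v) ⟨i, a⟩) (fun b => by
          have hd := hasDerivAt_transpose_mulVec B v s ⟨k, b⟩
          have h0 : HasDerivAt (fun s : ℝ => ((mexp (s • B))ᵀ *ᵥ v) ⟨k, b⟩) 0 s := by
            refine (hasDerivAt_const s (0 : ℝ)).congr_of_eventuallyEq ?_
            filter_upwards [Ioo_mem_nhds hs.1 hs.2] with s' hs'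
            exact ih s' hs' ⟨k, b⟩ rfl
          have h1 := hd.unique h0
          rw [Matrix.mulVec, dotProduct, Fintype.sum_sigma, Finset.sum_eq_single i] at h1
          · simpa using h1
          · intro j _ hj
            refine Finset.sum_eq_zero fun c _ => ?_
            rw [Matrix.transpose_apply, hB.sparse ⟨j, c⟩ ⟨k, b⟩ (fun h => hj (Fin.ext (h.trans hi.symm))),
              zero_mul]
          · simp)
      exact congrFun hg a
  have hz : (mexp ((1/2 : ℝ) • B))ᵀ *ᵥ v = 0 := by
    ext i
    exact key i.1 (1/2) (by norm_num) i rfl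
  have hu : IsUnit (mexp ((1/2 : ℝ) • B))ᵀ := by
    rw [mexp_eq, ← Matrix.exp_transpose]
    exact Matrix.isUnit_exp _
  exact Matrix.mulVec_injective_iff_isUnit.2 hu (by rw [hz, Matrix.mulVec_zero])

lemma continuous_cov_integrand (B A : Matrix (Idx r p) (Idx r p) ℝ) :
    Continuous fun s : ℝ => mexp (s • B) * A * (mexp (s • B))ᵀ :=
  ((continuous_mexp_smul B).matrix_mul continuous_const).matrix_mul
    (continuous_mexp_smul B).matrix_transpose

lemma continuous_cov_quad (B A : Matrix (Idx r p) (Idx r p) ℝ) (v : Idx r p → ℝ) :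
    Continuous fun s : ℝ => ((mexp (s • B))ᵀ *ᵥ v) ⬝ᵥ (A *ᵥ ((mexp (s • B))ᵀ *ᵥ v)) := by
  have h := (continuous_mexp_smul B).matrix_transpose.matrix_mulVec (continuous_const (y := v))
  exact h.dotProduct (continuous_const.matrix_mulVec h)

lemma cov_quad (B A : Matrix (Idx r p) (Idx r p) ℝ) (t : ℝ) (v : Idx r p → ℝ) :
    v ⬝ᵥ (covMat B A t *ᵥ v) =
      ∫ s in (0:ℝ)..t, ((mexp (s • B))ᵀ *ᵥ v) ⬝ᵥ (A *ᵥ ((mexp (s • B))ᵀ *ᵥ v)) := by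
  have hc : ∀ j k, Continuous fun s : ℝ => (mexp (s • B) * A * (mexp (s • B))ᵀ) j k :=
    fun j k => (continuous_cov_integrand B A).matrix_elem j k
  have e : ∀ s : ℝ, ((mexp (s • B))ᵀ *ᵥ v) ⬝ᵥ (A *ᵥ ((mexp (s • B))ᵀ *ᵥ v)) =
      ∑ j, ∑ k, v j * ((mexp (s • B) * A * (mexp (s • B))ᵀ) j k * v k) := by
    intro s
    rw [Matrix.mulVec_transpose, ← Matrix.dotProduct_mulVec, ← Matrix.mulVec_transpose,
      Matrix.mulVec_mulVec, Matrix.mulVec_mulVec]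
    simp only [dotProduct, Matrix.mulVec, Finset.mul_sum, Matrix.mul_assoc]
  have h1 : ∀ j k, IntervalIntegrable
      (fun s : ℝ => v j * ((mexp (s • B) * A * (mexp (s • B))ᵀ) j k * v k)) volume 0 t :=
    fun j k => (continuous_const.mul ((hc j k).mul continuous_const)).intervalIntegrable _ _
  have h2 : ∀ j, IntervalIntegrable
      (fun s : ℝ => ∑ k, v j * ((mexp (s • B) * A * (mexp (s • B))ᵀ) j k * v k)) volume 0 t :=
    fun j => (continuous_finsetSum _ fun k _ =>
      continuous_const.mul ((hc j k).mul continuous_const)).intervalIntegrable _ _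
  simp_rw [e]
  rw [intervalIntegral.integral_finsetSum fun j _ => h2 j]
  simp only [dotProduct, Matrix.mulVec, Finset.mul_sum]
  refine Finset.sum_congr rfl fun j _ => ?_
  rw [intervalIntegral.integral_finsetSum fun k _ => h1 j k]
  refine Finset.sum_congr rfl fun k _ => ?_
  rw [intervalIntegral.integral_const_mul, intervalIntegral.integral_mul_const]
  rfl

lemma embed0_quad (A₀ : Matrix (Fin (p 0)) (Fin (p 0)) ℝ) (w : Idx r p → ℝ) :
    w ⬝ᵥ (embed0 A₀ *ᵥ w) = (fun a => w ⟨0, a⟩) ⬝ᵥ A₀ *ᵥ (fun a => w ⟨0, a⟩) := by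
  have h1 : ∀ (i : Fin (r + 1)) (a : Fin (p i)), i ≠ 0 →
      ((embed0 A₀ : Matrix (Idx r p) (Idx r p) ℝ) *ᵥ w) ⟨i, a⟩ = 0 := by
    intro i a hi
    simp [Matrix.mulVec, dotProduct, embed0, hi]
  have h2 : ∀ a : Fin (p 0), ((embed0 A₀ : Matrix (Idx r p) (Idx r p) ℝ) *ᵥ w) ⟨0, a⟩ =
      (A₀ *ᵥ (fun a => w ⟨0, a⟩)) a := by
    intro a
    rw [Matrix.mulVec, dotProduct, Fintype.sum_sigma, Finset.sum_eq_single 0]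
    · simp [Matrix.mulVec, dotProduct, embed0]
    · intro j _ hj
      simp [embed0, hj]
    · simp
  rw [dotProduct, Fintype.sum_sigma, Finset.sum_eq_single 0]
  · simp [h2, dotProduct]
  · intro j _ hj
    simp [h1 j _ hj]
  · simp

lemma sq_norm_le_dotProduct (v : Idx r p → ℝ) : ‖v‖ ^ 2 ≤ v ⬝ᵥ v := by
  have h0 : 0 ≤ v ⬝ᵥ v := Finset.sum_nonneg fun i _ => mul_self_nonneg (v i)
  have h : ‖v‖ ≤ Real.sqrt (v ⬝ᵥ v) := by
    refine (pi_norm_le_iff_of_nonneg (Real.sqrt_nonneg _)).2 fun i => ?_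
    rw [Real.norm_eq_abs]
    refine Real.abs_le_sqrt ?_
    rw [sq]
    exact Finset.single_le_sum (f := fun i => v i * v i) (fun i _ => mul_self_nonneg (v i))
      (mem_univ i)
  calc ‖v‖ ^ 2 ≤ Real.sqrt (v ⬝ᵥ v) ^ 2 := by gcongr
    _ = _ := Real.sq_sqrt h0

lemma quad_smul (G : Matrix (Idx r p) (Idx r p) ℝ) (a : ℝ) (v : Idx r p → ℝ) :
    (a • v) ⬝ᵥ (G *ᵥ (a • v)) = a ^ 2 * (v ⬝ᵥ (G *ᵥ v)) := by
  rw [Matrix.mulVec_smul, dotProduct_smul, smul_dotProduct, smul_eq_mul, smul_eq_mul]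
  ring

lemma quad_lower (G : Matrix (Idx r p) (Idx r p) ℝ) (h : ∀ v, v ≠ 0 → 0 < v ⬝ᵥ (G *ᵥ v)) :
    ∃ m > 0, ∀ v, m * ‖v‖ ^ 2 ≤ v ⬝ᵥ (G *ᵥ v) := by
  have hc : Continuous fun v : Idx r p → ℝ => v ⬝ᵥ (G *ᵥ v) :=
    continuous_id.dotProduct (continuous_const.matrix_mulVec continuous_id)
  by_cases hne : (Metric.sphere (0 : Idx r p → ℝ) 1).Nonempty
  · obtain ⟨v₀, hv₀, hmin⟩ :=
      (isCompact_sphere (0 : Idx r p → ℝ) 1).exists_isMinOn hne hc.continuousOn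
    have hv₀' : v₀ ≠ 0 := by rintro rfl; simp at hv₀
    refine ⟨_, h v₀ hv₀', fun v => ?_⟩
    by_cases hv : v = 0
    · simp [hv]
    have hn : 0 < ‖v‖ := norm_pos_iff.2 hv
    have h1 : v₀ ⬝ᵥ (G *ᵥ v₀) ≤ (‖v‖⁻¹ • v) ⬝ᵥ (G *ᵥ (‖v‖⁻¹ • v)) :=
      hmin (by simp [norm_smul, hn.ne'])
    rw [quad_smul, inv_pow, ← div_eq_inv_mul, le_div_iff₀ (by positivity)] at h1
    exact h1
  · refine ⟨1, one_pos, fun v => ?_⟩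
    have hv : v = 0 := by
      by_contra hv
      exact hne ⟨‖v‖⁻¹ • v, by simp [norm_smul, (norm_pos_iff.2 hv).ne']⟩
    simp [hv]

lemma quad_upper (G : Matrix (Idx r p) (Idx r p) ℝ) :
    ∃ m > 0, ∀ v, v ⬝ᵥ (G *ᵥ v) ≤ m * ‖v‖ ^ 2 := by
  refine ⟨∑ i, ∑ j, |G i j| + 1, by positivity, fun v => ?_⟩
  have hv : ∀ i, |v i| ≤ ‖v‖ := fun i => norm_le_pi_norm v i
  have : v ⬝ᵥ (G *ᵥ v) ≤ (∑ i, ∑ j, |G i j|) * ‖v‖ ^ 2 := by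
    simp only [dotProduct, Matrix.mulVec, Finset.mul_sum, Finset.sum_mul]
    refine Finset.sum_le_sum fun i _ => Finset.sum_le_sum fun j _ => ?_
    calc v i * (G i j * v j) ≤ |v i * (G i j * v j)| := le_abs_self _
      _ = |v i| * (|G i j| * |v j|) := by rw [abs_mul, abs_mul]
      _ ≤ ‖v‖ * (|G i j| * ‖v‖) := by gcongr <;> exact hv _
      _ = _ := by ring
  nlinarith [sq_nonneg ‖v‖]

/-- Two-sided bounds for `C(1)`, uniform over the class of elliptic matrices `A₀`. -/
lemma cov_bounds {B : Matrix (Idx r p) (Idx r p) ℝ} (hB : IsKolB B) {M μ : ℝ} (hM : 0 < M)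
    (hμ : 0 < μ) :
    ∃ m > 0, ∃ m' > 0, ∀ A₀ : Matrix (Fin (p 0)) (Fin (p 0)) ℝ,
      (∀ ξ : Fin (p 0) → ℝ, ξ ≠ 0 →
        μ * M * (∑ i, ξ i ^ 2) < ξ ⬝ᵥ A₀ *ᵥ ξ ∧ ξ ⬝ᵥ A₀ *ᵥ ξ < M * ∑ i, ξ i ^ 2) →
      ∀ v : Idx r p → ℝ, m * ‖v‖ ^ 2 ≤ v ⬝ᵥ (covMat B (embed0 A₀) 1 *ᵥ v) ∧
        v ⬝ᵥ (covMat B (embed0 A₀) 1 *ᵥ v) ≤ m' * ‖v‖ ^ 2 := by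
  set I₀ : Matrix (Idx r p) (Idx r p) ℝ := embed0 1 with hI
  have hI₀ : ∀ w : Idx r p → ℝ, w ⬝ᵥ (I₀ *ᵥ w) = ∑ a, w ⟨0, a⟩ ^ 2 := by
    intro w
    rw [hI, embed0_quad]
    simp [dotProduct, sq]
  have hpos : ∀ v, v ≠ 0 → 0 < v ⬝ᵥ (covMat B I₀ 1 *ᵥ v) := by
    intro v hv
    rw [cov_quad]
    refine intervalIntegral.integral_pos one_pos (continuous_cov_quad B I₀ v).continuousOn
      (fun s _ => by rw [hI₀]; positivity) ?_
    by_contra! hcon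
    refine hv (kalman hB v fun s hs i hi => ?_)
    have h1 := hcon s ⟨hs.1.le, hs.2.le⟩
    rw [hI₀] at h1
    have h2 := (Finset.sum_eq_zero_iff_of_nonneg fun a _ => sq_nonneg _).1
      (le_antisymm h1 (Finset.sum_nonneg fun a _ => sq_nonneg _))
    obtain ⟨i, a⟩ := i
    obtain rfl : i = 0 := Fin.ext hi
    simpa using h2 a (mem_univ a)
  obtain ⟨m, hm, hlow⟩ := quad_lower _ hpos
  obtain ⟨m', hm', hup⟩ := quad_upper (covMat B I₀ 1)
  refine ⟨μ * M * m, by positivity, M * m', by positivity, fun A₀ hA v => ?_⟩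
  have hq : ∀ w : Idx r p → ℝ, μ * M * (w ⬝ᵥ (I₀ *ᵥ w)) ≤ w ⬝ᵥ (embed0 A₀ *ᵥ w) ∧
      w ⬝ᵥ (embed0 A₀ *ᵥ w) ≤ M * (w ⬝ᵥ (I₀ *ᵥ w)) := by
    intro w
    rw [hI₀, embed0_quad]
    by_cases hw : (fun a => w ⟨0, a⟩ : Fin (p 0) → ℝ) = 0
    · have : ∀ a, w ⟨0, a⟩ = 0 := fun a => congrFun hw a
      simp [this]
    · exact ⟨(hA _ hw).1.le, (hA _ hw).2.le⟩
  have c1 := continuous_cov_quad B I₀ v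
  have c2 := continuous_cov_quad B (embed0 A₀) v
  constructor
  · calc μ * M * m * ‖v‖ ^ 2 = μ * M * (m * ‖v‖ ^ 2) := by ring
      _ ≤ μ * M * (v ⬝ᵥ (covMat B I₀ 1 *ᵥ v)) := by gcongr; exact hlow v
      _ ≤ _ := by
        rw [cov_quad, cov_quad, ← intervalIntegral.integral_const_mul]
        exact intervalIntegral.integral_mono_on zero_le_one
          ((continuous_const.mul c1).intervalIntegrable _ _) (c2.intervalIntegrable _ _)
          fun s _ => (hq _).1
  · calc _ ≤ M * (v ⬝ᵥ (covMat B I₀ 1 *ᵥ v)) := by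
          rw [cov_quad, cov_quad, ← intervalIntegral.integral_const_mul]
          exact intervalIntegral.integral_mono_on zero_le_one
            (c2.intervalIntegrable _ _) ((continuous_const.mul c1).intervalIntegrable _ _)
            fun s _ => (hq _).2
      _ ≤ M * (m' * ‖v‖ ^ 2) := by gcongr; exact hup v
      _ = _ := by ring

lemma covMat_isSymm (B : Matrix (Idx r p) (Idx r p) ℝ)
    {A₀ : Matrix (Fin (p 0)) (Fin (p 0)) ℝ} (hA : A₀.IsSymm) (t : ℝ) :
    (covMat B (embed0 A₀) t).IsSymm := by
  have hE : (embed0 A₀ : Matrix (Idx r p) (Idx r p) ℝ)ᵀ = embed0 A₀ := by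
    ext j k
    by_cases h : j.1 = 0 ∧ k.1 = 0
    · simp only [embed0, Matrix.transpose_apply, Matrix.of_apply, dif_pos h, dif_pos h.symm]
      exact hA.apply _ _
    · simp only [embed0, Matrix.transpose_apply, Matrix.of_apply, dif_neg h,
        dif_neg fun h' => h (And.symm h')]
  ext j k
  simp only [covMat, Matrix.transpose_apply, Matrix.of_apply]
  congr 1
  funext s
  rw [← Matrix.transpose_apply (mexp (s • B) * embed0 A₀ * (mexp (s • B))ᵀ)]
  simp only [Matrix.transpose_mul, Matrix.transpose_transpose, hE, Matrix.mul_assoc]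

/-- Bounds for the quadratic form of a symmetric matrix pass to its inverse. -/
lemma inv_bounds {C : Matrix (Idx r p) (Idx r p) ℝ} (hC : C.IsSymm) {m m' : ℝ} (hm : 0 < m)
    (hm' : 0 < m') (h : ∀ v, m * ‖v‖ ^ 2 ≤ v ⬝ᵥ (C *ᵥ v) ∧ v ⬝ᵥ (C *ᵥ v) ≤ m' * ‖v‖ ^ 2) :
    (∀ i j, |C⁻¹ i j| ≤ 1 / m) ∧
      ∀ v, (1 / m') * ‖v‖ ^ 2 ≤ (C⁻¹ *ᵥ v) ⬝ᵥ v := by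
  have hinj : Function.Injective C.mulVec := by
    rw [← Matrix.coe_mulVecLin]
    refine (injective_iff_map_eq_zero C.mulVecLin).2 fun v hv => ?_
    have h1 := (h v).1
    rw [show C *ᵥ v = 0 from hv, dotProduct_zero] at h1
    have h2 : ‖v‖ ^ 2 = 0 := le_antisymm (by nlinarith [sq_nonneg ‖v‖]) (sq_nonneg _)
    exact norm_eq_zero.1 (pow_eq_zero_iff two_ne_zero |>.1 h2)
  have hu : IsUnit C.det :=
    (Matrix.isUnit_iff_isUnit_det C).1 (Matrix.mulVec_injective_iff_isUnit.1 hinj)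
  have hCQ : ∀ v, C *ᵥ (C⁻¹ *ᵥ v) = v := fun v => by
    rw [Matrix.mulVec_mulVec, Matrix.mul_nonsing_inv _ hu, Matrix.one_mulVec]
  refine ⟨fun i j => ?_, fun v => ?_⟩
  · set u := C⁻¹ *ᵥ Pi.single j 1 with hu'
    have h1 := (h u).1
    rw [hCQ, dotProduct_single_one] at h1
    have h2 : u j ≤ ‖u‖ := (le_abs_self _).trans (norm_le_pi_norm u j)
    have h3 : ‖u‖ ≤ 1 / m := by
      rw [le_div_iff₀ hm]
      by_contra! hlt
      have : 0 < ‖u‖ := by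
        by_contra! h0
        nlinarith [norm_nonneg u]
      nlinarith
    have h4 : C⁻¹ i j = u i := by simp [hu']
    rw [h4]
    exact (norm_le_pi_norm u i).trans h3
  · set u := C⁻¹ *ᵥ v with hu'
    -- test the nonnegative form on `u - v / m'`
    have h1 := (h (u - (1 / m') • v)).1
    have h2 := (h v).2
    have h3 := sq_norm_le_dotProduct v
    have h4 : u ⬝ᵥ (C *ᵥ v) = v ⬝ᵥ v := by
      rw [Matrix.dotProduct_mulVec, ← Matrix.mulVec_transpose, hC.eq, hCQ]
    have h5 : (u - (1 / m') • v) ⬝ᵥ (C *ᵥ (u - (1 / m') • v)) =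
        u ⬝ᵥ v - 2 * (1 / m') * (v ⬝ᵥ v) + (1 / m') ^ 2 * (v ⬝ᵥ (C *ᵥ v)) := by
      rw [Matrix.mulVec_sub, Matrix.mulVec_smul, sub_dotProduct, dotProduct_sub, dotProduct_sub,
        smul_dotProduct, smul_dotProduct, dotProduct_smul, dotProduct_smul, h4, hCQ]
      simp only [smul_eq_mul]
      ring
    rw [h5] at h1
    have h6 : (1 / m') ^ 2 * (v ⬝ᵥ (C *ᵥ v)) ≤ (1 / m') * ‖v‖ ^ 2 := by
      calc _ ≤ (1 / m') ^ 2 * (m' * ‖v‖ ^ 2) := by gcongr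
        _ = _ := by field_simp
    have h7 : (1 / m') * ‖v‖ ^ 2 ≤ (1 / m') * (v ⬝ᵥ v) := by gcongr
    have h8 : 0 ≤ m * ‖u - (1 / m') • v‖ ^ 2 := by positivity
    linarith

end Covariance

/-! ### Scaling -/

section Scaling

lemma D0mat_inv {lam : ℝ} (hl : 0 < lam) :
    (D0mat r p lam)⁻¹ = Matrix.diagonal fun j => (lam ^ sigmaWt j)⁻¹ := by
  refine Matrix.inv_eq_right_inv ?_
  rw [D0mat, Matrix.diagonal_mul_diagonal, ← Matrix.diagonal_one]
  congr 1
  funext j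
  exact mul_inv_cancel₀ (by positivity)

lemma D0mat_transpose (lam : ℝ) : (D0mat r p lam)ᵀ = D0mat r p lam :=
  Matrix.diagonal_transpose _

lemma D0mat_mulVec (lam : ℝ) (v : Idx r p → ℝ) (i : Idx r p) :
    (D0mat r p lam *ᵥ v) i = lam ^ sigmaWt i * v i :=
  Matrix.mulVec_diagonal _ _ _

lemma det_D0mat_ne_zero {lam : ℝ} (hl : 0 < lam) : (D0mat r p lam).det ≠ 0 := by
  rw [D0mat, Matrix.det_diagonal]
  exact Finset.prod_ne_zero_iff.2 fun j _ => by positivity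

/-- `B` is homogeneous of degree two with respect to the dilations `D₀(λ)`. -/
lemma smul_eq_conj {B : Matrix (Idx r p) (Idx r p) ℝ} (hB : IsKolB B) {lam : ℝ} (hl : 0 < lam)
    (s : ℝ) : (lam ^ 2 * s) • B = D0mat r p lam * (s • B) * (D0mat r p lam)⁻¹ := by
  ext j k
  rw [D0mat_inv hl, D0mat, Matrix.mul_diagonal, Matrix.diagonal_mul, Matrix.smul_apply,
    Matrix.smul_apply, smul_eq_mul, smul_eq_mul]
  by_cases h : (j.1 : ℕ) = (k.1 : ℕ) + 1
  · have : sigmaWt j = sigmaWt k + 2 := by unfold sigmaWt; omega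
    rw [this, pow_add]
    field_simp
  · rw [hB.sparse j k h]
    simp

lemma mexp_scale {B : Matrix (Idx r p) (Idx r p) ℝ} (hB : IsKolB B) {lam : ℝ} (hl : 0 < lam)
    (s : ℝ) : mexp ((lam ^ 2 * s) • B) = D0mat r p lam * mexp (s • B) * (D0mat r p lam)⁻¹ := by
  rw [mexp_eq, mexp_eq, smul_eq_conj hB hl, Matrix.exp_conj]
  exact (Matrix.isUnit_iff_isUnit_det _).2 (isUnit_iff_ne_zero.2 (det_D0mat_ne_zero hl))

lemma embed0_scale (A₀ : Matrix (Fin (p 0)) (Fin (p 0)) ℝ) {lam : ℝ} (hl : 0 < lam) :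
    (D0mat r p lam)⁻¹ * embed0 A₀ * (D0mat r p lam)⁻¹ =
      (lam ^ 2)⁻¹ • (embed0 A₀ : Matrix (Idx r p) (Idx r p) ℝ) := by
  ext j k
  rw [D0mat_inv hl, Matrix.mul_diagonal, Matrix.diagonal_mul, Matrix.smul_apply, smul_eq_mul]
  by_cases h : j.1 = 0 ∧ k.1 = 0
  · have h1 : sigmaWt j = 1 := by simp [sigmaWt, h.1]
    have h2 : sigmaWt k = 1 := by simp [sigmaWt, h.2]
    rw [h1, h2]
    field_simp
  · simp [embed0, h]

lemma covMat_scale {B : Matrix (Idx r p) (Idx r p) ℝ} (hB : IsKolB B)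
    (A₀ : Matrix (Fin (p 0)) (Fin (p 0)) ℝ) {lam : ℝ} (hl : 0 < lam) :
    covMat B (embed0 A₀) (lam ^ 2) =
      D0mat r p lam * covMat B (embed0 A₀) 1 * D0mat r p lam := by
  have hint : ∀ s : ℝ, mexp ((lam ^ 2 * s) • B) * embed0 A₀ * (mexp ((lam ^ 2 * s) • B))ᵀ =
      (lam ^ 2)⁻¹ • (D0mat r p lam * (mexp (s • B) * embed0 A₀ * (mexp (s • B))ᵀ) *
        D0mat r p lam) := by
    intro s
    rw [mexp_scale hB hl, Matrix.transpose_mul, Matrix.transpose_mul, D0mat_transpose,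
      Matrix.transpose_nonsing_inv, D0mat_transpose]
    calc _ = D0mat r p lam * mexp (s • B) * ((D0mat r p lam)⁻¹ * embed0 A₀ * (D0mat r p lam)⁻¹) *
          (mexp (s • B))ᵀ * D0mat r p lam := by simp only [Matrix.mul_assoc]
      _ = _ := by
        rw [embed0_scale A₀ hl]
        simp only [Matrix.mul_smul, Matrix.smul_mul, Matrix.mul_assoc]
  ext j k
  rw [D0mat, Matrix.mul_diagonal, Matrix.diagonal_mul]
  simp only [covMat, Matrix.of_apply]
  have h := intervalIntegral.smul_integral_comp_mul_left (a := 0) (b := 1)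
    (fun s : ℝ => (mexp (s • B) * embed0 A₀ * (mexp (s • B))ᵀ) j k) (lam ^ 2)
  rw [mul_zero, mul_one] at h
  rw [← h]
  simp only [hint, Matrix.smul_apply, smul_eq_mul, D0mat, Matrix.mul_diagonal,
    Matrix.diagonal_mul]
  rw [intervalIntegral.integral_const_mul, intervalIntegral.integral_mul_const,
    intervalIntegral.integral_const_mul]
  field_simp

lemma hnorm_D0mat {lam : ℝ} (hl : 0 < lam) (v : Idx r p → ℝ) :
    hnorm (D0mat r p lam *ᵥ v) = lam * hnorm v := by
  unfold hnorm
  rw [Finset.mul_sum]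
  refine Finset.sum_congr rfl fun j _ => ?_
  have hs : (sigmaWt j : ℝ) ≠ 0 := by unfold sigmaWt; positivity
  rw [D0mat_mulVec, abs_mul, abs_of_pos (by positivity : 0 < lam ^ sigmaWt j),
    Real.mul_rpow (by positivity) (abs_nonneg _), ← Real.rpow_natCast, ← Real.rpow_mul hl.le,
    mul_one_div_cancel hs, Real.rpow_one]

lemma integral_comp_D0mat {lam : ℝ} (hl : 0 < lam) (F : (Idx r p → ℝ) → ℝ) :
    ∫ y, F y = |(D0mat r p lam).det| * ∫ z, F (D0mat r p lam *ᵥ z) := by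
  have hd := det_D0mat_ne_zero (r := r) (p := p) hl
  have hmap := Real.map_matrix_volume_pi_eq_smul_volume_pi hd
  have hemb : MeasurableEmbedding (Matrix.toLin' (D0mat r p lam)) := by
    refine (Topology.IsClosedEmbedding.measurableEmbedding ?_)
    refine LinearMap.isClosedEmbedding_of_injective (LinearMap.ker_eq_bot.2 ?_)
    exact Matrix.mulVec_injective_iff_isUnit.2
      ((Matrix.isUnit_iff_isUnit_det _).2 (isUnit_iff_ne_zero.2 hd))
  have h := hemb.integral_map (μ := volume) F
  rw [hmap, integral_smul_measure, ENNReal.toReal_ofReal (abs_nonneg _), abs_inv] at h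
  simp only [Matrix.toLin'_apply] at h
  rw [← h, smul_eq_mul, mul_inv_cancel_left₀ (abs_ne_zero.2 hd)]

/-- The substitution `y = D₀(λ) z`, `λ² = T - t`, turns `u₀(t, ·)` into a Gaussian convolution at
unit time. -/
lemma u0fn_eq_polConv {B : Matrix (Idx r p) (Idx r p) ℝ} (hB : IsKolB B)
    (A₀ : Matrix (Fin (p 0)) (Fin (p 0)) ℝ) {lam t T : ℝ} (hl : 0 < lam)
    (ht : T - t = lam ^ 2) (ψ : (Idx r p → ℝ) → ℝ) :
    (fun x' => u0fn B (embed0 A₀) T ψ t x') =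
      polConv (mexp B) (covMat B (embed0 A₀) 1)⁻¹ (fun z => ψ (D0mat r p lam *ᵥ z))
        (fun i => (lam ^ sigmaWt i)⁻¹)
        ((2 * Real.pi) ^ (-(Fintype.card (Idx r p) : ℝ) / 2) *
          |(covMat B (embed0 A₀) 1).det| ^ (-(1:ℝ) / 2)) (fun _ _ => 1) := by
  funext x
  set D := D0mat r p lam with hD
  set C := covMat B (embed0 A₀) 1 with hC
  have hd : D.det ≠ 0 := det_D0mat_ne_zero hl
  have hdu : IsUnit D.det := isUnit_iff_ne_zero.2 hd
  have hE : mexp (lam ^ 2 • B) = D * mexp B * D⁻¹ := by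
    have := mexp_scale hB hl 1
    rwa [mul_one, one_smul] at this
  have hDx : D⁻¹ *ᵥ x = (fun i => (lam ^ sigmaWt i)⁻¹) * x := by
    ext i
    rw [hD, D0mat_inv hl, Matrix.mulVec_diagonal]
    rfl
  have hexp : ∀ z, ((D * C * D)⁻¹ *ᵥ (D *ᵥ z - mexp (lam ^ 2 • B) *ᵥ x)) ⬝ᵥ
        (D *ᵥ z - mexp (lam ^ 2 • B) *ᵥ x) =
      (C⁻¹ *ᵥ (z - mexp B *ᵥ ((fun i => (lam ^ sigmaWt i)⁻¹) * x))) ⬝ᵥ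
        (z - mexp B *ᵥ ((fun i => (lam ^ sigmaWt i)⁻¹) * x)) := by
    intro z
    have e1 : D *ᵥ z - mexp (lam ^ 2 • B) *ᵥ x =
        D *ᵥ (z - mexp B *ᵥ ((fun i => (lam ^ sigmaWt i)⁻¹) * x)) := by
      rw [hE, Matrix.mulVec_sub, ← hDx, Matrix.mulVec_mulVec, Matrix.mulVec_mulVec,
        Matrix.mul_assoc]
    rw [e1]
    set w := z - mexp B *ᵥ ((fun i => (lam ^ sigmaWt i)⁻¹) * x)
    rw [Matrix.mulVec_mulVec, Matrix.mul_inv_rev, Matrix.mul_inv_rev, Matrix.mul_assoc,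
      Matrix.mul_assoc, Matrix.nonsing_inv_mul _ hdu, Matrix.mul_one, ← Matrix.mulVec_mulVec,
      Matrix.dotProduct_mulVec, ← Matrix.mulVec_transpose, hD, D0mat_transpose, ← hD,
      Matrix.mulVec_mulVec, Matrix.mul_nonsing_inv _ hdu, Matrix.one_mulVec]
  have hdet : |D.det| * |(D * C * D).det| ^ (-(1:ℝ) / 2) = |C.det| ^ (-(1:ℝ) / 2) := by
    have hp : 0 < |D.det| := abs_pos.2 hd
    have e : |(D * C * D).det| = |D.det| ^ (2:ℝ) * |C.det| := by
      rw [Matrix.det_mul, Matrix.det_mul, abs_mul, abs_mul, Real.rpow_two]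
      ring
    rw [e, Real.mul_rpow (by positivity) (abs_nonneg _), ← Real.rpow_mul hp.le,
      show (2:ℝ) * (-(1:ℝ) / 2) = -1 by norm_num, Real.rpow_neg_one,
      mul_inv_cancel_left₀ hp.ne']
  simp only [u0fn, polConv, gauss, polGauss, one_mul]
  rw [ht, covMat_scale hB A₀ hl, ← hC, ← hD, integral_comp_D0mat hl, ← hD]
  simp only [hexp]
  rw [← hdet]
  generalize |(D * C * D).det| ^ (-(1:ℝ) / 2) = κ
  simp only [mul_assoc, integral_const_mul]
  rw [mul_left_comm]

end Scaling

/-! ### The estimate -/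

/-- A bound for the normalizing constant of the Gaussian with covariance `C` that is uniform in `C`
when the entries of `C⁻¹` are bounded; it comes from bounding `det C⁻¹`. -/
lemma abs_normalization_le {C : Matrix (Idx r p) (Idx r p) ℝ} {q : ℝ}
    (hq : ∀ i j, |C⁻¹ i j| ≤ q) :
    |(2 * Real.pi) ^ (-(Fintype.card (Idx r p) : ℝ) / 2) * |C.det| ^ (-(1:ℝ) / 2)| ≤
      (2 * Real.pi) ^ (-(Fintype.card (Idx r p) : ℝ) / 2) *
        ((Fintype.card (Idx r p)).factorial • q ^ Fintype.card (Idx r p)) ^ ((1:ℝ) / 2) := by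
  rw [abs_of_nonneg (by positivity)]
  refine mul_le_mul_of_nonneg_left ?_ (by positivity)
  have h := Matrix.det_le (A := C⁻¹) (abv := AbsoluteValue.abs) hq
  rw [AbsoluteValue.abs_apply, Matrix.det_nonsing_inv, Ring.inverse_eq_inv', abs_inv] at h
  rw [neg_div, Real.rpow_neg (abs_nonneg _), ← Real.inv_rpow (abs_nonneg _)]
  exact Real.rpow_le_rpow (by positivity) h (by norm_num)

lemma scaling_exponent {lam τ k : ℝ} (hl : 0 < lam) (hτ : τ = lam ^ 2) (β : Idx r p → ℕ) :
    lam ^ k * ∏ i, ((lam ^ sigmaWt i)⁻¹) ^ β i = τ ^ ((k - (bwt β : ℝ)) / 2) := by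
  have h1 : ∏ i, ((lam ^ sigmaWt i)⁻¹) ^ β i = (lam ^ bwt β)⁻¹ := by
    simp only [inv_pow, ← pow_mul, Finset.prod_inv_distrib, Finset.prod_pow_eq_pow_sum]
    rfl
  rw [h1, hτ, ← Real.rpow_natCast lam 2, ← Real.rpow_mul hl.le, ← Real.rpow_natCast lam (bwt β),
    ← Real.rpow_neg hl.le, ← Real.rpow_add hl]
  congr 1
  push_cast
  ring

/-- If `ψ ∈ C^k_B(ℝ^d)` (bounded continuous for `k = 0`) and `|β|_B > 0`, then
`|D^β u₀(t,x)| ≤ C (T-t)^{(k-|β|_B)/2}` on `[0,T) × ℝ^d`, where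
`u₀(t,x) = ∫ Γ₀(t,x;T,y) ψ(y) dy` and `C` depends only on `M, μ, B, T, β` and the
`C^k_B`-seminorm (resp. sup-norm) `Cψ` of `ψ`. -/
theorem Dx_u0_bound {r : ℕ} {p : Fin (r + 1) → ℕ}
    (B : Matrix (Idx r p) (Idx r p) ℝ) (hB : IsKolB B)
    (M μ T : ℝ) (hM : 0 < M) (hμ0 : 0 < μ) (hμ1 : μ < 1) (hT : 0 < T)
    (k : ℝ) (hk0 : 0 ≤ k) (hk1 : k ≤ 2 * (r : ℝ) + 1)
    (β : Idx r p → ℕ) (hβ : 0 < bwt β) (Cψ : ℝ) :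
    ∃ C > 0, ∀ A₀ : Matrix (Fin (p 0)) (Fin (p 0)) ℝ, A₀.IsSymm →
      (∀ ξ : Fin (p 0) → ℝ, ξ ≠ 0 →
        μ * M * (∑ i, ξ i ^ 2) < ξ ⬝ᵥ A₀ *ᵥ ξ ∧ ξ ⬝ᵥ A₀ *ᵥ ξ < M * ∑ i, ξ i ^ 2) →
      ∀ ψ : (Idx r p → ℝ) → ℝ,
      (0 < k → ∀ x y, |ψ x - ψ y| ≤ Cψ * hnorm (x - y) ^ k) →
      (k = 0 → Continuous ψ ∧ ∀ x, |ψ x| ≤ Cψ) →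
      ∀ (t : ℝ) (x : Idx r p → ℝ), 0 ≤ t → t < T →
        |Dx β (fun x' => u0fn B (embed0 A₀) T ψ t x') x|
          ≤ C * (T - t) ^ ((k - (bwt β : ℝ)) / 2) := by
  obtain ⟨m, hm, m', hm', hcov⟩ := cov_bounds hB hM hμ0
  obtain ⟨K, hK0, hK⟩ := abs_Dx_polConv_le (mexp B) hβ (1 / m)
    (by positivity : 0 < 1 / m') hk0
  set N : ℝ := (2 * Real.pi) ^ (-(Fintype.card (Idx r p) : ℝ) / 2) *
    ((Fintype.card (Idx r p)).factorial • (1 / m) ^ Fintype.card (Idx r p)) ^ ((1:ℝ) / 2) with hN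
  have hN0 : 0 ≤ N := by positivity
  refine ⟨N * (K * (2 * |Cψ|)) + 1, by positivity, fun A₀ hA hell ψ hψ hψ0 t x _ htT => ?_⟩
  have hτ : 0 < T - t := sub_pos.2 htT
  set lam := Real.sqrt (T - t) with hlam
  have hl : 0 < lam := Real.sqrt_pos.2 hτ
  have ht : T - t = lam ^ 2 := (Real.sq_sqrt hτ.le).symm
  obtain ⟨hQ, hQc⟩ := inv_bounds (covMat_isSymm B hA 1) hm hm' (hcov A₀ hell)
  -- both cases of the hypothesis on `ψ` give a Hölder bound, with `[·]_B ^ 0 = 1` when `k = 0`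
  have hcψ : Continuous ψ ∧ ∀ x y, |ψ x - ψ y| ≤ 2 * |Cψ| * hnorm (x - y) ^ k := by
    rcases hk0.eq_or_lt with h0 | h0
    · obtain ⟨hc, hb⟩ := hψ0 h0.symm
      refine ⟨hc, fun x y => ?_⟩
      rw [← h0, Real.rpow_zero, mul_one]
      have h1 := abs_sub (ψ x) (ψ y)
      linarith [hb x, hb y, le_abs_self Cψ]
    · refine ⟨continuous_of_holder h0 (hψ h0), fun x y => (hψ h0 x y).trans ?_⟩
      refine mul_le_mul_of_nonneg_right ?_ (Real.rpow_nonneg (hnorm_nonneg _) _)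
      linarith [le_abs_self Cψ, abs_nonneg Cψ]
  have hφ : ∀ z z', |ψ (D0mat r p lam *ᵥ z) - ψ (D0mat r p lam *ᵥ z')| ≤
      (2 * |Cψ| * lam ^ k) * hnorm (z - z') ^ k := by
    intro z z'
    refine (hcψ.2 _ _).trans_eq ?_
    rw [← Matrix.mulVec_sub, hnorm_D0mat hl, Real.mul_rpow hl.le (hnorm_nonneg _)]
    ring
  have hφc : Continuous fun z => ψ (D0mat r p lam *ᵥ z) :=
    hcψ.1.comp (continuous_const.matrix_mulVec continuous_id)
  rw [u0fn_eq_polConv hB A₀ hl ht ψ]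
  refine (hK _ hQ hQc _ _ (by positivity) hφc hφ _ _ x).trans ?_
  have hP : 0 ≤ ∏ i : Idx r p, ((lam ^ sigmaWt i)⁻¹) ^ β i :=
    Finset.prod_nonneg fun i _ => by positivity
  rw [abs_mul, abs_of_nonneg hP, ← scaling_exponent (k := k) hl ht β]
  have hn := abs_normalization_le hQ
  rw [← hN] at hn
  calc _ ≤ N * (∏ i : Idx r p, ((lam ^ sigmaWt i)⁻¹) ^ β i) * (K * (2 * |Cψ| * lam ^ k)) := by
        gcongr
    _ = N * (K * (2 * |Cψ|)) * (lam ^ k * ∏ i : Idx r p, ((lam ^ sigmaWt i)⁻¹) ^ β i) := by ring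
    _ ≤ _ := by
        gcongr
        linarith
end
end

section
/- Fix z̄ = (t̄, x̄) and a multi-index β ∈ ℕ_0^d. There exist real constants c_{δ,α}, indexed by pairs of multi-indices (δ, α) with |δ| + |α| ≤ |β| and |δ|_B - |α|_B ≤ |β|_B, with |c_{δ,α}| bounded by a constant depending only on B, β and the entries of M̄(1), such that for every multi-index γ, all 0 ≤ t < s and x, y ∈ ℝ^d: (M(s-t,x) - e^{(s-t̄)B} x̄)^β D_x^γ Γ_0(t,x;s,y) = Σ_{(δ,α)} c_{δ,α} (s-t)^{(|β|_B + |α|_B - |δ|_B)/2} (x - e^{(t-t̄)B} x̄)^δ D_x^{α+γ} Γ_0(t,x;s,y), where the operator power on the left is well defined since the components of M(s-t,x) commute on derivatives of Γ_0. -/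
/-! The operators `M_i(τ,x)` become explicit after centring. With `m = e^{(t-t̄)B} x̄` and `τ = s - t`,
the semigroup law gives `e^{(s-t̄)B} x̄ = e^{τB} m`, so the shifted operator is
`Σ_j (e^{τB})_{ij} (x-m)_j + Σ_j (e^{τB} M̄(τ))_{ij} ∂_j`.

As `B` is strictly block subdiagonal, `(B^n)_{ij} = 0` unless the group of `i` is `n` below that
of `j`. Hence `(e^{τB})_{ij} = τ^{(σ_i-σ_j)/2} (e^B)_{ij}`, which vanishes for `σ_j > σ_i`, and
a change of variables in the integral for `C(τ)`, together with the support of `A`, gives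
`(e^{τB} M̄(τ))_{ij} = τ^{(σ_i+σ_j)/2} (e^B M̄(1))_{ij}` (`mexp_smul`, `mexp_mul_Mbar_scaling`).
So all the dependence on `τ` is through powers fixed by the weights `σ`, with coefficients built
from `B` and `M̄(1)` only.

It remains to count degrees. Fix the monomials `τ^{(N+|α|_B-|δ|_B)/2} (x-m)^δ D^{α+γ} f`, regarded
as functions of `(τ, m, f, γ)` as well as of `x`. The `i`-th operator maps such a monomial to a
linear combination, with constant coefficients, of monomials with `N + σ_i` in place of `N`: a
factor `(x-m)_j` raises `δ`, while `∂_j` lowers `δ` or raises `α` by the Leibniz rule. The bounds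
`|δ| + |α| ≤ n` and `|δ|_B ≤ N + |α|_B` pass to `n + 1` and `N + σ_i` (`homOpP_mem`). Of the kernel
only smoothness in `x` is used. Working in the span of these monomials as functions of all the
data makes the coefficients uniform. -/

open MeasureTheory Matrix Finset

noncomputable section

variable {r : ℕ} {p : Fin (r + 1) → ℕ}

/-! ### Iterated partial derivatives of smooth functions -/

lemma contDiff_pdx {f : (Idx r p → ℝ) → ℝ} (hf : ContDiff ℝ (⊤ : ℕ∞) f) (i : Idx r p) :
    ContDiff ℝ (⊤ : ℕ∞) (pdx i f) := by
  unfold pdx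
  exact (hf.fderiv_right (m := (⊤ : ℕ∞)) (by simp)).clm_apply contDiff_const

lemma contDiff_pdx_iterate {f : (Idx r p → ℝ) → ℝ} (hf : ContDiff ℝ (⊤ : ℕ∞) f)
    (i : Idx r p) (n : ℕ) : ContDiff ℝ (⊤ : ℕ∞) ((pdx i)^[n] f) := by
  induction n with
  | zero => simpa using hf
  | succ n ih => rw [Function.iterate_succ_apply']; exact contDiff_pdx ih i

lemma contDiff_foldr {f : (Idx r p → ℝ) → ℝ} (hf : ContDiff ℝ (⊤ : ℕ∞) f)
    (α : Idx r p → ℕ) (l : List (Idx r p)) :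
    ContDiff ℝ (⊤ : ℕ∞) (l.foldr (fun i g => (pdx i)^[α i] g) f) := by
  induction l with
  | nil => simpa using hf
  | cons i l ih => exact contDiff_pdx_iterate ih i _

lemma contDiff_Dx {f : (Idx r p → ℝ) → ℝ} (hf : ContDiff ℝ (⊤ : ℕ∞) f)
    (α : Idx r p → ℕ) : ContDiff ℝ (⊤ : ℕ∞) (Dx α f) :=
  contDiff_foldr hf α _

lemma pdx_comm {f : (Idx r p → ℝ) → ℝ} (hf : ContDiff ℝ (⊤ : ℕ∞) f) (i j : Idx r p) :
    pdx i (pdx j f) = pdx j (pdx i f) := by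
  have hd : Differentiable ℝ (fderiv ℝ f) :=
    (hf.fderiv_right (m := (⊤ : ℕ∞)) (by simp)).differentiable (by simp)
  have key : ∀ (k l : Idx r p) (x : Idx r p → ℝ), pdx k (pdx l f) x
      = fderiv ℝ (fderiv ℝ f) x (Pi.single k 1) (Pi.single l 1) := by
    intro k l x
    unfold pdx
    rw [fderiv_clm_apply (hd x) (differentiableAt_const _)]
    simp
  funext x
  rw [key, key]
  exact (hf.contDiffAt.isSymmSndFDerivAt (by simp; exact WithTop.coe_le_coe.2 le_top)).eq _ _

lemma pdx_iterate_comm {f : (Idx r p → ℝ) → ℝ} (hf : ContDiff ℝ (⊤ : ℕ∞) f)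
    (i j : Idx r p) (n : ℕ) : pdx j ((pdx i)^[n] f) = (pdx i)^[n] (pdx j f) := by
  induction n with
  | zero => rfl
  | succ n ih =>
    rw [Function.iterate_succ_apply', Function.iterate_succ_apply', ← ih,
      pdx_comm (contDiff_pdx_iterate hf i n)]

lemma foldr_pdx_congr (f : (Idx r p → ℝ) → ℝ) (α α' : Idx r p → ℕ) (l : List (Idx r p))
    (h : ∀ i ∈ l, α i = α' i) :
    l.foldr (fun i g => (pdx i)^[α i] g) f = l.foldr (fun i g => (pdx i)^[α' i] g) f := by
  induction l with
  | nil => rfl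
  | cons i l ih =>
    simp only [List.foldr_cons]
    rw [ih (fun k hk => h k (List.mem_cons_of_mem _ hk)), h i List.mem_cons_self]

lemma pdx_foldr {f : (Idx r p → ℝ) → ℝ} (hf : ContDiff ℝ (⊤ : ℕ∞) f)
    (α : Idx r p → ℕ) (j : Idx r p) (l : List (Idx r p)) (hl : l.Nodup) (hj : j ∈ l) :
    pdx j (l.foldr (fun i g => (pdx i)^[α i] g) f)
      = l.foldr (fun i g => (pdx i)^[(α + Pi.single j 1 : Idx r p → ℕ) i] g) f := by
  induction l with
  | nil => simp at hj
  | cons i l ih =>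
    rw [List.nodup_cons] at hl
    simp only [List.foldr_cons]
    by_cases hij : j = i
    · subst hij
      rw [foldr_pdx_congr f (α + Pi.single j 1) α l, ← Function.iterate_succ_apply' (pdx j)]
      · simp
      · intro k hk
        have : k ≠ j := fun h => hl.1 (h ▸ hk)
        simp [this]
    · have hjl : j ∈ l := by simpa [hij] using hj
      rw [pdx_iterate_comm (contDiff_foldr hf α l), ih hl.2 hjl]
      have : i ≠ j := fun h => hij h.symm
      simp [this]

lemma pdx_Dx {f : (Idx r p → ℝ) → ℝ} (hf : ContDiff ℝ (⊤ : ℕ∞) f)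
    (α : Idx r p → ℕ) (j : Idx r p) : pdx j (Dx α f) = Dx (α + Pi.single j 1) f :=
  pdx_foldr hf α j _ (Finset.nodup_toList _) (by simp)

lemma pdx_add {f g : (Idx r p → ℝ) → ℝ} (hf : ContDiff ℝ (⊤ : ℕ∞) f)
    (hg : ContDiff ℝ (⊤ : ℕ∞) g) (j : Idx r p) (x : Idx r p → ℝ) :
    pdx j (f + g) x = pdx j f x + pdx j g x := by
  unfold pdx
  rw [fderiv_add (hf.differentiable (by simp) x) (hg.differentiable (by simp) x)]
  simp

lemma pdx_smul {f : (Idx r p → ℝ) → ℝ} (hf : ContDiff ℝ (⊤ : ℕ∞) f)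
    (c : ℝ) (j : Idx r p) (x : Idx r p → ℝ) :
    pdx j (c • f) x = c * pdx j f x := by
  unfold pdx
  rw [fderiv_const_smul (hf.differentiable (by simp) x)]
  simp

lemma pdx_mul {f g : (Idx r p → ℝ) → ℝ} (hf : ContDiff ℝ (⊤ : ℕ∞) f)
    (hg : ContDiff ℝ (⊤ : ℕ∞) g) (j : Idx r p) (x : Idx r p → ℝ) :
    pdx j (fun x => f x * g x) x = f x * pdx j g x + pdx j f x * g x := by
  unfold pdx
  rw [fderiv_fun_mul (hf.differentiable (by simp) x) (hg.differentiable (by simp) x)]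
  simp [mul_comm]

/-! ### The monomials of the normal form and the action of a first order operator -/

/-- The data on which the coefficients of the representation may not depend: the time increment
`τ > 0`, the centre `m`, a smooth function `f` (a Gaussian, in the application) and the order `γ`
of the derivative the operators are applied to. -/
structure Par (r : ℕ) (p : Fin (r + 1) → ℕ) where
  τ : ℝ
  pos : 0 < τ
  m : Idx r p → ℝ
  f : (Idx r p → ℝ) → ℝ
  smooth : ContDiff ℝ (⊤ : ℕ∞) f
  γ : Idx r p → ℕ

/-- The shifted monomial `(x - m)^δ`. -/
def wpow (m : Idx r p → ℝ) (δ : Idx r p → ℕ) (x : Idx r p → ℝ) : ℝ := ∏ j, (x j - m j) ^ δ j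

/-- The monomial `τ^{(N + |α|_B - |δ|_B)/2} (x - m)^δ D^{α+γ} f` for `q = (δ, α)`, as a function
of all the data, so that linear combinations of such monomials have uniform coefficients. -/
def mono (N : ℕ) (q : (Idx r p → ℕ) × (Idx r p → ℕ)) : Par r p → (Idx r p → ℝ) → ℝ :=
  fun P x => P.τ ^ (((N : ℝ) + (bwt q.2 : ℝ) - (bwt q.1 : ℝ)) / 2) *
    wpow P.m q.1 x * Dx (q.2 + P.γ) P.f x

/-- The pairs `(δ, α)` with `|δ| + |α| ≤ n` and `|δ|_B - |α|_B ≤ N`. -/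
def goodSet (n N : ℕ) : Set ((Idx r p → ℕ) × (Idx r p → ℕ)) :=
  {q | (∑ j, q.1 j) + (∑ j, q.2 j) ≤ n ∧ bwt q.1 ≤ N + bwt q.2}

/-- Families of functions that are combinations, with uniform coefficients, of the monomials
indexed by `goodSet n N`. -/
def repSpan (n N : ℕ) : Submodule ℝ (Par r p → (Idx r p → ℝ) → ℝ) :=
  Submodule.span ℝ (mono N '' goodSet n N)

/-- The homogeneous first order operator
`h ↦ Σ_j a_{ij} τ^{(σ_i-σ_j)/2} (x-m)_j h + Σ_j b_{ij} τ^{(σ_i+σ_j)/2} ∂_j h`. -/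
def homOp (a b : Matrix (Idx r p) (Idx r p) ℝ) (τ : ℝ) (m : Idx r p → ℝ) (i : Idx r p)
    (h : (Idx r p → ℝ) → ℝ) : (Idx r p → ℝ) → ℝ :=
  fun x => (∑ j, a i j * (τ ^ (((sigmaWt i : ℝ) - sigmaWt j) / 2) * ((x j - m j) * h x))) +
    ∑ j, b i j * (τ ^ (((sigmaWt i : ℝ) + sigmaWt j) / 2) * pdx j h x)

/-- `homOp` acting on families. -/
def homOpP (a b : Matrix (Idx r p) (Idx r p) ℝ) (i : Idx r p)
    (F : Par r p → (Idx r p → ℝ) → ℝ) : Par r p → (Idx r p → ℝ) → ℝ :=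
  fun P => homOp a b P.τ P.m i (F P)

lemma contDiff_wpow (m : Idx r p → ℝ) (δ : Idx r p → ℕ) :
    ContDiff ℝ (⊤ : ℕ∞) (wpow m δ) := by
  unfold wpow
  fun_prop

lemma wpow_add_single (m : Idx r p → ℝ) (δ : Idx r p → ℕ) (j : Idx r p) (x : Idx r p → ℝ) :
    wpow m (δ + Pi.single j 1) x = (x j - m j) * wpow m δ x := by
  unfold wpow
  simp only [Pi.add_apply, pow_add, Finset.prod_mul_distrib]
  rw [mul_comm]
  congr 1
  rw [Finset.prod_eq_single j] <;> simp +contextual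

lemma pdx_wpow (m : Idx r p → ℝ) (δ : Idx r p → ℕ) (j : Idx r p) (x : Idx r p → ℝ) :
    pdx j (wpow m δ) x = δ j * wpow m (δ - Pi.single j 1) x := by
  classical
  have hc : ∀ k : Idx r p, HasFDerivAt (fun x : Idx r p → ℝ => x k - m k)
      (ContinuousLinearMap.proj (R := ℝ) (φ := fun _ : Idx r p => ℝ) k) x := fun k =>
    (ContinuousLinearMap.proj (R := ℝ) (φ := fun _ : Idx r p => ℝ) k).hasFDerivAt.sub_const _
  have h := HasFDerivAt.finsetProd (u := Finset.univ) (fun k _ => (hc k).pow (δ k))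
  have h2 : fderiv ℝ (wpow m δ) x = _ := h.fderiv
  unfold pdx
  rw [h2]
  simp only [_root_.sum_apply, _root_.smul_apply,
    ContinuousLinearMap.proj_apply, Pi.single_apply, smul_eq_mul]
  rw [Finset.sum_eq_single j]
  · unfold wpow
    rw [← Finset.mul_prod_erase Finset.univ _ (Finset.mem_univ j)]
    have : ∏ k ∈ Finset.univ.erase j, (x k - m k) ^ (δ - Pi.single j 1 : Idx r p → ℕ) k
        = ∏ k ∈ Finset.univ.erase j, (x k - m k) ^ δ k := by
      refine Finset.prod_congr rfl fun k hk => ?_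
      simp [Finset.ne_of_mem_erase hk]
    rw [this]
    simp
    ring
  · intro k _ hk
    simp [hk]
  · simp

lemma contDiff_mono (N : ℕ) (q : (Idx r p → ℕ) × (Idx r p → ℕ)) (P : Par r p) :
    ContDiff ℝ (⊤ : ℕ∞) (mono N q P) := by
  unfold mono
  exact (contDiff_const.mul (contDiff_wpow _ _)).mul (contDiff_Dx P.smooth _)

lemma bwt_add_single (δ : Idx r p → ℕ) (j : Idx r p) :
    bwt (δ + Pi.single j 1) = bwt δ + sigmaWt j := by
  unfold bwt
  simp only [Pi.add_apply, mul_add, Finset.sum_add_distrib]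
  congr 1
  rw [Finset.sum_eq_single j] <;> simp +contextual

lemma sum_add_single (δ : Idx r p → ℕ) (j : Idx r p) :
    ∑ k, (δ + Pi.single j 1 : Idx r p → ℕ) k = (∑ k, δ k) + 1 := by
  simp [Finset.sum_add_distrib]

lemma sub_add_single (δ : Idx r p → ℕ) (j : Idx r p) (h : δ j ≠ 0) :
    (δ - Pi.single j 1) + Pi.single j 1 = δ := by
  funext k
  by_cases hk : k = j
  · subst hk; simp; omega
  · simp [hk]

/-- Multiplication by `τ^{(σ_i-σ_j)/2} (x-m)_j` maps monomials to monomials. -/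
lemma coord_mul_mono (N : ℕ) (q : (Idx r p → ℕ) × (Idx r p → ℕ)) (i j : Idx r p)
    (P : Par r p) (x : Idx r p → ℝ) :
    P.τ ^ (((sigmaWt i : ℝ) - sigmaWt j) / 2) * ((x j - P.m j) * mono N q P x)
      = mono (N + sigmaWt i) (q.1 + Pi.single j 1, q.2) P x := by
  unfold mono
  simp only [wpow_add_single, bwt_add_single]
  have : P.τ ^ ((((N + sigmaWt i : ℕ) : ℝ) + (bwt q.2 : ℝ)
      - ((bwt q.1 + sigmaWt j : ℕ) : ℝ)) / 2) = P.τ ^ (((sigmaWt i : ℝ) - sigmaWt j) / 2)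
      * P.τ ^ (((N : ℝ) + (bwt q.2 : ℝ) - (bwt q.1 : ℝ)) / 2) := by
    rw [← Real.rpow_add P.pos]
    congr 1
    push_cast
    ring
  rw [this]
  ring

/-- The Leibniz rule for `τ^{(σ_i+σ_j)/2} ∂_j` on monomials. -/
lemma pdx_mono (N : ℕ) (q : (Idx r p → ℕ) × (Idx r p → ℕ)) (i j : Idx r p)
    (P : Par r p) (x : Idx r p → ℝ) :
    P.τ ^ (((sigmaWt i : ℝ) + sigmaWt j) / 2) * pdx j (mono N q P) x
      = q.1 j * mono (N + sigmaWt i) (q.1 - Pi.single j 1, q.2) P x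
        + mono (N + sigmaWt i) (q.1, q.2 + Pi.single j 1) P x := by
  have h1 : pdx j (mono N q P) x = P.τ ^ (((N : ℝ) + (bwt q.2 : ℝ) - (bwt q.1 : ℝ)) / 2) *
      (wpow P.m q.1 x * Dx (q.2 + Pi.single j 1 + P.γ) P.f x
        + q.1 j * wpow P.m (q.1 - Pi.single j 1) x * Dx (q.2 + P.γ) P.f x) := by
    have : mono N q P = (P.τ ^ (((N : ℝ) + (bwt q.2 : ℝ) - (bwt q.1 : ℝ)) / 2)) •
        (fun x => wpow P.m q.1 x * Dx (q.2 + P.γ) P.f x) := by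
      funext x
      simp [mono, mul_assoc]
    rw [this, pdx_smul ((contDiff_wpow _ _).mul (contDiff_Dx P.smooth _)),
      pdx_mul (contDiff_wpow _ _) (contDiff_Dx P.smooth _), pdx_Dx P.smooth, pdx_wpow,
      add_right_comm q.2]
  rw [h1]
  unfold mono
  simp only [bwt_add_single]
  have e1 : P.τ ^ ((((N + sigmaWt i : ℕ) : ℝ) + ((bwt q.2 + sigmaWt j : ℕ) : ℝ)
      - (bwt q.1 : ℝ)) / 2) = P.τ ^ (((sigmaWt i : ℝ) + sigmaWt j) / 2)
      * P.τ ^ (((N : ℝ) + (bwt q.2 : ℝ) - (bwt q.1 : ℝ)) / 2) := by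
    rw [← Real.rpow_add P.pos]
    congr 1
    push_cast
    ring
  rw [e1]
  by_cases hq : q.1 j = 0
  · simp only [hq]
    push_cast
    ring
  · have hb : (bwt q.1 : ℝ) = bwt (q.1 - Pi.single j 1) + sigmaWt j := by
      have := bwt_add_single (q.1 - Pi.single j 1) j
      rw [sub_add_single _ _ hq] at this
      exact_mod_cast this
    have e2 : P.τ ^ ((((N + sigmaWt i : ℕ) : ℝ) + (bwt q.2 : ℝ)
        - (bwt (q.1 - Pi.single j 1) : ℝ)) / 2) = P.τ ^ (((sigmaWt i : ℝ) + sigmaWt j) / 2)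
        * P.τ ^ (((N : ℝ) + (bwt q.2 : ℝ) - (bwt q.1 : ℝ)) / 2) := by
      rw [← Real.rpow_add P.pos]
      congr 1
      rw [hb]
      push_cast
      ring
    rw [e2]
    ring

lemma contDiff_of_mem_repSpan {n N : ℕ} {F : Par r p → (Idx r p → ℝ) → ℝ}
    (hF : F ∈ repSpan n N) (P : Par r p) : ContDiff ℝ (⊤ : ℕ∞) (F P) := by
  unfold repSpan at hF
  induction hF using Submodule.span_induction with
  | mem F hF =>
    obtain ⟨q, -, rfl⟩ := hF
    exact contDiff_mono N q P
  | zero => exact contDiff_const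
  | add F G _ _ hF hG => exact hF.add hG
  | smul c F _ hF => exact hF.const_smul c

lemma mono_mem {n N : ℕ} {q : (Idx r p → ℕ) × (Idx r p → ℕ)}
    (h1 : (∑ j, q.1 j) + (∑ j, q.2 j) ≤ n) (h2 : bwt q.1 ≤ N + bwt q.2) :
    mono N q ∈ repSpan n N :=
  Submodule.subset_span ⟨q, ⟨h1, h2⟩, rfl⟩

/-- One operator raises the degree bound by `1` and the homogeneity bound by `σ_i`. The vanishing
of `a i j` for `σ_j > σ_i` keeps the second bound under multiplication by a coordinate. -/
lemma homOpP_mem (a b : Matrix (Idx r p) (Idx r p) ℝ)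
    (ha : ∀ i j, sigmaWt i < sigmaWt j → a i j = 0) (i : Idx r p) {n N : ℕ}
    {F : Par r p → (Idx r p → ℝ) → ℝ} (hF : F ∈ repSpan n N) :
    homOpP a b i F ∈ repSpan (n + 1) (N + sigmaWt i) := by
  unfold repSpan at hF
  induction hF using Submodule.span_induction with
  | mem F hF =>
    obtain ⟨q, ⟨hq1, hq2⟩, rfl⟩ := hF
    have : homOpP a b i (mono N q) =
        (∑ j, a i j • mono (N + sigmaWt i) (q.1 + Pi.single j 1, q.2)) +
        ∑ j, b i j • ((q.1 j : ℝ) • mono (N + sigmaWt i) (q.1 - Pi.single j 1, q.2)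
          + mono (N + sigmaWt i) (q.1, q.2 + Pi.single j 1)) := by
      funext P x
      simp only [homOpP, homOp, coord_mul_mono, pdx_mono, Pi.add_apply, Finset.sum_apply,
        Pi.smul_apply, smul_eq_mul]
    rw [this]
    refine Submodule.add_mem _ (Submodule.sum_mem _ fun j _ => ?_)
      (Submodule.sum_mem _ fun j _ => Submodule.smul_mem _ _ (Submodule.add_mem _ ?_ ?_))
    · by_cases hij : sigmaWt i < sigmaWt j
      · rw [ha i j hij, zero_smul]
        exact Submodule.zero_mem _
      · refine Submodule.smul_mem _ _ (mono_mem ?_ ?_)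
        · simp only [sum_add_single]
          omega
        · simp only [bwt_add_single]
          omega
    · by_cases hq : q.1 j = 0
      · simp [hq]
      · have hb := bwt_add_single (q.1 - Pi.single j 1) j
        have hs := sum_add_single (q.1 - Pi.single j 1) j
        rw [sub_add_single _ _ hq] at hb hs
        refine Submodule.smul_mem _ _ (mono_mem ?_ ?_)
        · simp only
          omega
        · simp only
          omega
    · refine mono_mem ?_ ?_
      · simp only [sum_add_single]
        omega
      · simp only [bwt_add_single]
        omega
  | zero =>
    have : homOpP a b i (0 : Par r p → (Idx r p → ℝ) → ℝ) = 0 := by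
      funext P x
      simp [homOpP, homOp, pdx]
    rw [this]
    exact Submodule.zero_mem _
  | add F G hF' hG' hF hG =>
    have : homOpP a b i (F + G) = homOpP a b i F + homOpP a b i G := by
      funext P x
      simp only [homOpP, homOp, Pi.add_apply, mul_add, Finset.sum_add_distrib,
        pdx_add (contDiff_of_mem_repSpan hF' P) (contDiff_of_mem_repSpan hG' P)]
      ring
    rw [this]
    exact Submodule.add_mem _ hF hG
  | smul c F hF' hF =>
    have : homOpP a b i (c • F) = c • homOpP a b i F := by
      funext P x
      simp only [homOpP, homOp, Pi.smul_apply, smul_eq_mul, mul_add, Finset.mul_sum,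
        pdx_smul (contDiff_of_mem_repSpan hF' P)]
      congr 1 <;> exact Finset.sum_congr rfl fun j _ => by ring
    rw [this]
    exact Submodule.smul_mem _ _ hF

lemma homOpP_iterate_mem (a b : Matrix (Idx r p) (Idx r p) ℝ)
    (ha : ∀ i j, sigmaWt i < sigmaWt j → a i j = 0) (i : Idx r p) (k : ℕ) {n N : ℕ}
    {F : Par r p → (Idx r p → ℝ) → ℝ} (hF : F ∈ repSpan n N) :
    (homOpP a b i)^[k] F ∈ repSpan (n + k) (N + sigmaWt i * k) := by
  induction k with
  | zero => simpa using hF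
  | succ k ih =>
    rw [Function.iterate_succ_apply']
    have := homOpP_mem a b ha i ih
    rwa [show n + (k + 1) = n + k + 1 by ring,
      show N + sigmaWt i * (k + 1) = N + sigmaWt i * k + sigmaWt i by ring]

lemma homOpP_foldr_mem (a b : Matrix (Idx r p) (Idx r p) ℝ)
    (ha : ∀ i j, sigmaWt i < sigmaWt j → a i j = 0) (β : Idx r p → ℕ) (l : List (Idx r p)) :
    l.foldr (fun i g => (homOpP a b i)^[β i] g) (fun P => Dx P.γ P.f)
      ∈ repSpan (l.map β).sum (l.map fun i => sigmaWt i * β i).sum := by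
  induction l with
  | nil =>
    have : (fun P : Par r p => Dx P.γ P.f) = mono 0 (0, 0) := by
      funext P x
      simp [mono, wpow, bwt]
    simp only [List.foldr_nil]
    rw [this]
    exact mono_mem (by simp) (by simp [bwt])
  | cons i l ih =>
    simp only [List.foldr_cons, List.map_cons, List.sum_cons]
    rw [add_comm (β i), add_comm (sigmaWt i * β i)]
    exact homOpP_iterate_mem a b ha i (β i) ih

lemma homOpP_iterate_apply (a b : Matrix (Idx r p) (Idx r p) ℝ) (i : Idx r p) (k : ℕ)
    (F : Par r p → (Idx r p → ℝ) → ℝ) (P : Par r p) :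
    (homOpP a b i)^[k] F P = (homOp a b P.τ P.m i)^[k] (F P) := by
  induction k with
  | zero => rfl
  | succ k ih => rw [Function.iterate_succ_apply', Function.iterate_succ_apply', ← ih]; rfl

lemma homOpP_foldr_apply (a b : Matrix (Idx r p) (Idx r p) ℝ) (β : Idx r p → ℕ)
    (l : List (Idx r p)) (F : Par r p → (Idx r p → ℝ) → ℝ) (P : Par r p) :
    l.foldr (fun i g => (homOpP a b i)^[β i] g) F P
      = l.foldr (fun i g => (homOp a b P.τ P.m i)^[β i] g) (F P) := by
  induction l with
  | nil => rfl
  | cons i l ih => simp only [List.foldr_cons]; rw [homOpP_iterate_apply, ih]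

lemma coe_Sset (β : Idx r p → ℕ) :
    (Sset β : Set ((Idx r p → ℕ) × (Idx r p → ℕ))) = goodSet (∑ j, β j) (bwt β) := by
  ext q
  simp only [Sset, goodSet, Finset.coe_filter, Finset.mem_product, Fintype.mem_piFinset,
    Finset.mem_range, Set.mem_ofPred_eq]
  constructor
  · rintro ⟨-, h1, h2⟩
    exact ⟨h1, by omega⟩
  · rintro ⟨h1, h2⟩
    have key : ∀ (δ : Idx r p → ℕ) (k : Idx r p), δ k ≤ ∑ j, δ j := fun δ k =>
      Finset.single_le_sum (fun _ _ => Nat.zero_le _) (Finset.mem_univ k)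
    refine ⟨⟨fun k => ?_, fun k => ?_⟩, h1, by omega⟩
    · have := key q.1 k
      omega
    · have := key q.2 k
      omega

/-- The representation for powers of general homogeneous operators `homOp`. -/
lemma exists_representation (a b : Matrix (Idx r p) (Idx r p) ℝ)
    (ha : ∀ i j, sigmaWt i < sigmaWt j → a i j = 0) (β : Idx r p → ℕ) :
    ∃ c : (Idx r p → ℕ) × (Idx r p → ℕ) → ℝ, ∀ P : Par r p, ∀ x,
      (Finset.univ (α := Idx r p)).toList.foldr (fun i g => (homOp a b P.τ P.m i)^[β i] g)
        (Dx P.γ P.f) x = ∑ q ∈ Sset β, c q * mono (bwt β) q P x := by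
  have h := homOpP_foldr_mem a b ha β (Finset.univ (α := Idx r p)).toList
  rw [Finset.sum_map_toList, Finset.sum_map_toList] at h
  change _ ∈ repSpan (∑ j, β j) (bwt β) at h
  rw [repSpan, ← coe_Sset, Submodule.mem_span_image_finset_iff_exists_fun] at h
  obtain ⟨c, hc⟩ := h
  refine ⟨fun q => if hq : q ∈ Sset β then c ⟨q, hq⟩ else 0, fun P x => ?_⟩
  have := homOpP_foldr_apply a b β (Finset.univ (α := Idx r p)).toList (fun P => Dx P.γ P.f) P
  rw [← this, ← hc, ← Finset.sum_coe_sort (Sset β)]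
  simp [Finset.sum_apply]

/-! ### Homogeneity of the matrix exponential, of `C(τ)` and of `M̄(τ)` -/

/-- The only nonzero entries of `M` are in the blocks immediately below the diagonal. -/
def Subdiag (M : Matrix (Idx r p) (Idx r p) ℝ) : Prop :=
  ∀ j k : Idx r p, (j.1 : ℕ) ≠ (k.1 : ℕ) + 1 → M j k = 0

lemma Subdiag.smul {M : Matrix (Idx r p) (Idx r p) ℝ} (hM : Subdiag M) (c : ℝ) :
    Subdiag (c • M) := fun j k h => by simp [hM j k h]

lemma Subdiag.pow_apply {M : Matrix (Idx r p) (Idx r p) ℝ} (hM : Subdiag M) (n : ℕ) :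
    ∀ j k : Idx r p, (j.1 : ℕ) ≠ (k.1 : ℕ) + n → (M ^ n) j k = 0 := by
  induction n with
  | zero =>
    intro j k h
    have : j ≠ k := fun e => h (by simp [e])
    simp [this]
  | succ n ih =>
    intro j k h
    rw [pow_succ, Matrix.mul_apply]
    refine Finset.sum_eq_zero fun l _ => ?_
    by_cases h1 : (l.1 : ℕ) = (k.1 : ℕ) + 1
    · rw [ih j l (by omega), zero_mul]
    · rw [hM l k h1, mul_zero]

lemma Subdiag.mexp_eq_zero {M : Matrix (Idx r p) (Idx r p) ℝ} (hM : Subdiag M)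
    {i j : Idx r p} (h : sigmaWt i < sigmaWt j) : mexp M i j = 0 := by
  have : ∀ n : ℕ, ((n.factorial : ℝ)⁻¹ • M ^ n) i j = 0 := fun n => by
    rw [Matrix.smul_apply, hM.pow_apply n i j (by unfold sigmaWt at h; omega), smul_zero]
  simp only [mexp, Matrix.of_apply, this, tsum_zero]

/-- `(e^{τM})_{ij} = τ^{(σ_i-σ_j)/2} (e^M)_{ij}`: the only power of `M` contributing to the entry
`(i, j)` is the one whose exponent is the difference of the groups of `i` and `j`. -/
lemma Subdiag.mexp_smul {M : Matrix (Idx r p) (Idx r p) ℝ} (hM : Subdiag M)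
    (τ : ℝ) (i j : Idx r p) :
    mexp (τ • M) i j = τ ^ ((sigmaWt i : ℝ) / 2 + -((sigmaWt j : ℝ) / 2)) * mexp M i j := by
  simp only [mexp, Matrix.of_apply]
  rw [← tsum_mul_left]
  congr 1
  funext n
  rw [smul_pow]
  simp only [Matrix.smul_apply, smul_eq_mul]
  by_cases h : (i.1 : ℕ) = (j.1 : ℕ) + n
  · have : τ ^ ((sigmaWt i : ℝ) / 2 + -((sigmaWt j : ℝ) / 2)) = τ ^ n := by
      rw [← Real.rpow_natCast]
      congr 1
      unfold sigmaWt
      rw [h]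
      push_cast
      ring
    rw [this]
    ring
  · rw [hM.pow_apply n i j h]
    simp

/-- Products of matrices whose entries scale like powers of `τ` scale accordingly. -/
lemma mul_scaling {τ : ℝ} (hτ : 0 < τ) {u v w : Idx r p → ℝ}
    {X X' Y Y' : Matrix (Idx r p) (Idx r p) ℝ}
    (hX : ∀ i j, X i j = τ ^ (u i + v j) * X' i j)
    (hY : ∀ i j, Y i j = τ ^ (-v i + w j) * Y' i j) (i j : Idx r p) :
    (X * Y) i j = τ ^ (u i + w j) * (X' * Y') i j := by
  rw [Matrix.mul_apply, Matrix.mul_apply, Finset.mul_sum]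
  refine Finset.sum_congr rfl fun k _ => ?_
  rw [hX, hY, show u i + w j = (u i + v k) + (-v k + w j) by ring,
    Real.rpow_add hτ (u i + v k)]
  ring

/-- A trivial identity: the entries off the first block vanish, and on it `σ_i = σ_j = 1`. The
exponent is written in the form `mul_scaling` asks for. -/
lemma embed0_scaling (A₀ : Matrix (Fin (p 0)) (Fin (p 0)) ℝ) (τ : ℝ) (i j : Idx r p) :
    embed0 A₀ i j = τ ^ (-(-((sigmaWt i : ℝ) / 2)) + ((sigmaWt j : ℝ) / 2 - 1))
      * embed0 A₀ i j := by
  by_cases h : i.1 = 0 ∧ j.1 = 0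
  · have : -(-((sigmaWt i : ℝ) / 2)) + ((sigmaWt j : ℝ) / 2 - 1) = 0 := by
      simp only [sigmaWt, h.1, h.2]
      norm_num
    rw [this, Real.rpow_zero, one_mul]
  · simp [embed0, h]

lemma covMat_scaling {B : Matrix (Idx r p) (Idx r p) ℝ} (hB : Subdiag B)
    (A₀ : Matrix (Fin (p 0)) (Fin (p 0)) ℝ) {τ : ℝ} (hτ : 0 < τ) (i j : Idx r p) :
    covMat B (embed0 A₀) τ i j
      = τ ^ ((sigmaWt i : ℝ) / 2 + (sigmaWt j : ℝ) / 2) * covMat B (embed0 A₀) 1 i j := by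
  have key : ∀ u : ℝ, (mexp ((τ * u) • B) * embed0 A₀ * (mexp ((τ * u) • B))ᵀ) i j
      = τ ^ ((sigmaWt i : ℝ) / 2 + ((sigmaWt j : ℝ) / 2 - 1)) *
        (mexp (u • B) * embed0 A₀ * (mexp (u • B))ᵀ) i j := by
    intro u
    rw [mul_smul]
    refine mul_scaling hτ (v := fun k => (sigmaWt k : ℝ) / 2 - 1)
      (u := fun k => (sigmaWt k : ℝ) / 2) (w := fun k => (sigmaWt k : ℝ) / 2 - 1)
      (mul_scaling hτ ((hB.smul u).mexp_smul τ) (embed0_scaling A₀ τ)) ?_ i j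
    intro k l
    rw [Matrix.transpose_apply, Matrix.transpose_apply, (hB.smul u).mexp_smul τ]
    congr 2
    ring
  simp only [covMat, Matrix.of_apply]
  have h := intervalIntegral.smul_integral_comp_mul_left (a := 0) (b := 1)
    (fun s : ℝ => (mexp (s • B) * embed0 A₀ * (mexp (s • B))ᵀ) i j) τ
  rw [mul_zero, mul_one] at h
  rw [← h]
  simp only [key]
  rw [intervalIntegral.integral_const_mul, smul_eq_mul, ← mul_assoc]
  congr 1
  rw [show (sigmaWt i : ℝ) / 2 + (sigmaWt j : ℝ) / 2
    = 1 + ((sigmaWt i : ℝ) / 2 + ((sigmaWt j : ℝ) / 2 - 1)) by ring, 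
    Real.rpow_add hτ 1, Real.rpow_one]

lemma mexp_mul_Mbar_scaling {B : Matrix (Idx r p) (Idx r p) ℝ} (hB : Subdiag B)
    (A₀ : Matrix (Fin (p 0)) (Fin (p 0)) ℝ) {τ : ℝ} (hτ : 0 < τ) (i j : Idx r p) :
    (mexp (τ • B) * Mbar B (embed0 A₀) τ) i j
      = τ ^ ((sigmaWt i : ℝ) / 2 + (sigmaWt j : ℝ) / 2) *
        (mexp B * Mbar B (embed0 A₀) 1) i j := by
  have hneg : ∀ i j, mexp (-(τ • B)) i j
      = τ ^ ((sigmaWt i : ℝ) / 2 + -((sigmaWt j : ℝ) / 2)) * mexp (-((1 : ℝ) • B)) i j := by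
    intro i j
    have := ((hB.smul (-1)).mexp_smul τ) i j
    rwa [smul_comm, neg_one_smul, neg_one_smul, ← one_smul ℝ B, smul_smul, mul_one] at this
  refine mul_scaling hτ (u := fun k => (sigmaWt k : ℝ) / 2)
    (w := fun k => (sigmaWt k : ℝ) / 2) (hB.mexp_smul τ) ?_ i j
  unfold Mbar
  refine mul_scaling hτ (u := fun k => -(-((sigmaWt k : ℝ) / 2)))
    (v := fun k => (sigmaWt k : ℝ) / 2) (w := fun k => (sigmaWt k : ℝ) / 2)
    (mul_scaling hτ (u := fun k => -(-((sigmaWt k : ℝ) / 2)))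
      (v := fun k => -((sigmaWt k : ℝ) / 2)) (w := fun k => (sigmaWt k : ℝ) / 2) ?_ ?_) ?_
  · intro k l
    rw [hneg, neg_neg]
  · intro k l
    rw [covMat_scaling hB A₀ hτ, neg_neg]
  · intro k l
    rw [Matrix.transpose_apply, Matrix.transpose_apply, hneg]
    congr 2
    ring

lemma mexp_eq_exp (M : Matrix (Idx r p) (Idx r p) ℝ) : mexp M = NormedSpace.exp M := by
  let : NormedRing (Matrix (Idx r p) (Idx r p) ℝ) := Matrix.linftyOpNormedRing
  let : NormedAlgebra ℝ (Matrix (Idx r p) (Idx r p) ℝ) := Matrix.linftyOpNormedAlgebra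
  have h := NormedSpace.exp_series_hasSum_exp' (𝕂 := ℝ) M
  ext i j
  have h2 := (Pi.hasSum.1 (Pi.hasSum.1 h i) j)
  exact h2.tsum_eq

lemma mexp_add (B : Matrix (Idx r p) (Idx r p) ℝ) (u v : ℝ) :
    mexp ((u + v) • B) = mexp (u • B) * mexp (v • B) := by
  rw [mexp_eq_exp, mexp_eq_exp, mexp_eq_exp, add_smul]
  exact Matrix.exp_add_of_commute _ _ (((Commute.refl B).smul_left u).smul_right v)

/-- After centring at `m`, the shifted operator `M_i(τ,·) - (e^{τB} m)_i` is one of the homogeneous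
first order operators. -/
lemma MopShift_eq_homOp {B : Matrix (Idx r p) (Idx r p) ℝ} (hB : Subdiag B)
    (A₀ : Matrix (Fin (p 0)) (Fin (p 0)) ℝ) {τ : ℝ} (hτ : 0 < τ) (m : Idx r p → ℝ)
    (i : Idx r p) :
    MopShift B (embed0 A₀) τ ((mexp (τ • B) *ᵥ m) i) i
      = homOp (mexp B) (mexp B * Mbar B (embed0 A₀) 1) τ m i := by
  funext h x
  simp only [MopShift, Mop, homOp]
  rw [add_sub_right_comm, ← sub_mul]
  congr 1
  · simp only [Matrix.mulVec, dotProduct]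
    rw [← Finset.sum_sub_distrib, Finset.sum_mul]
    refine Finset.sum_congr rfl fun j _ => ?_
    rw [hB.mexp_smul τ, show (sigmaWt i : ℝ) / 2 + -((sigmaWt j : ℝ) / 2)
      = ((sigmaWt i : ℝ) - sigmaWt j) / 2 by ring]
    ring
  · simp only [Matrix.mulVec, dotProduct]
    refine Finset.sum_congr rfl fun j _ => ?_
    rw [mexp_mul_Mbar_scaling hB A₀ hτ, ← add_div]
    ring

lemma contDiff_gauss (B A : Matrix (Idx r p) (Idx r p) ℝ) (t s : ℝ) (y : Idx r p → ℝ) :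
    ContDiff ℝ (⊤ : ℕ∞) (fun x => gauss B A t x s y) := by
  unfold gauss
  simp only [Matrix.mulVec, dotProduct, Pi.sub_apply]
  fun_prop

/-- Representation of the shifted powers of `M`: there exist constants
`c_{δ,α}`, indexed by pairs `(δ,α)` with `|δ|+|α| ≤ |β|` and `|δ|_B - |α|_B ≤ |β|_B`,
depending only on `B`, `β` and `M̄(1)`, such that for every `γ`, all `0 ≤ t < s`, `x, y`:
`(M(s-t,x) - e^{(s-t̄)B}x̄)^β D^γ Γ₀ =
 Σ c_{δ,α} (s-t)^{(|β|_B+|α|_B-|δ|_B)/2} (x-e^{(t-t̄)B}x̄)^δ D^{α+γ} Γ₀`. -/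
theorem MshiftPow_representation {r : ℕ} {p : Fin (r + 1) → ℕ}
    (B : Matrix (Idx r p) (Idx r p) ℝ) (hB : IsKolB B)
    (A₀ : Matrix (Fin (p 0)) (Fin (p 0)) ℝ) (hA₀ : A₀.PosDef)
    (β : Idx r p → ℕ) :
    ∃ c : (Idx r p → ℕ) × (Idx r p → ℕ) → ℝ,
      ∀ (tb : ℝ) (xb : Idx r p → ℝ) (γ : Idx r p → ℕ) (t s : ℝ), 0 ≤ t → t < s →
        ∀ x y : Idx r p → ℝ,
        MshiftPow B (embed0 A₀) (s - t) (mexp ((s - tb) • B) *ᵥ xb) β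
            (Dx γ (fun x' => gauss B (embed0 A₀) t x' s y)) x
          = ∑ q ∈ Sset β, c q *
              (s - t) ^ (((bwt β : ℝ) + (bwt q.2 : ℝ) - (bwt q.1 : ℝ)) / 2) *
              (∏ j, (x j - (mexp ((t - tb) • B) *ᵥ xb) j) ^ q.1 j) *
              Dx (fun j => q.2 j + γ j) (fun x' => gauss B (embed0 A₀) t x' s y) x := by
  have hS : Subdiag B := hB.sparse
  obtain ⟨c, hc⟩ := exists_representation (mexp B) (mexp B * Mbar B (embed0 A₀) 1)
    (fun i j h => hS.mexp_eq_zero h) β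
  refine ⟨c, fun tb xb γ t s _ hts x y => ?_⟩
  have hτ : 0 < s - t := sub_pos.2 hts
  have hm : mexp ((s - tb) • B) *ᵥ xb = mexp ((s - t) • B) *ᵥ (mexp ((t - tb) • B) *ᵥ xb) := by
    rw [Matrix.mulVec_mulVec, ← mexp_add, sub_add_sub_cancel]
  have h := hc ⟨s - t, hτ, mexp ((t - tb) • B) *ᵥ xb, fun x' => gauss B (embed0 A₀) t x' s y,
    contDiff_gauss _ _ _ _ _, γ⟩ x
  unfold MshiftPow
  simp only [hm, MopShift_eq_homOp hS A₀ hτ]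
  rw [h]
  refine Finset.sum_congr rfl fun q _ => ?_
  simp only [mono, wpow, ← mul_assoc]
  rfl
end
end
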